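/- arXiv:2108.02857 — 2 statements merged into one kernel-verified Lean document; each statement's English description precedes it below -/
import Mathlib

section
/- Let θ > 0 and take the mesh Δₙ = n^{−λ} with 1/2 < λ < 1. Then Yule's discrete nonsense correlation ρ̃(n) converges to 0 almost surely as n → ∞. -/
open MeasureTheory ProbabilityTheory Real Filter Finset
open scoped Topology ENNReal NNReal

noncomputable section

/-- Kolmogorov distance between two Borel measures on `ℝ`. -/
def dKol (μ ν : Measure ℝ) : ℝ :=
  ⨆ z : ℝ, |(μ (Set.Iic z)).toReal - (ν (Set.Iic z)).toReal|

/-- `X 0, X 1 : ℝ → Ω → ℝ` is a pair of independent centered Gaussian processes,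
started at `0`, with almost surely continuous paths on `[0,∞)` and the
Ornstein–Uhlenbeck covariance `E[Xᵢ(s)Xᵢ(t)] = (e^{−θ|t−s|} − e^{−θ(t+s)})/(2θ)`. -/
structure IsOUPair {Ω : Type} [MeasureSpace Ω] (θ : ℝ) (X : Fin 2 → ℝ → Ω → ℝ) : Prop where
  meas : ∀ i t, Measurable (X i t)
  gaussian : ∀ (i : Fin 2) (n : ℕ) (t : Fin n → ℝ) (c : Fin n → ℝ), (∀ j, 0 ≤ t j) →
      ∃ v : NNReal, Measure.map (fun ω => ∑ j, c j * X i (t j) ω) ℙ = gaussianReal 0 v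
  indep : IndepFun (fun ω t => X 0 t ω) (fun ω t => X 1 t ω) ℙ
  cont : ∀ᵐ ω ∂(ℙ : Measure Ω), ∀ i, ContinuousOn (fun t => X i t ω) (Set.Ici 0)
  init : ∀ i ω, X i 0 ω = 0
  cov : ∀ (i : Fin 2) (s t : ℝ), 0 ≤ s → 0 ≤ t →
      ∫ ω, X i s ω * X i t ω ∂ℙ
        = (Real.exp (-θ * |t - s|) - Real.exp (-θ * (t + s))) / (2 * θ)

variable {Ω : Type} [MeasureSpace Ω]

/-- `F_T := T^{-1/2} ∫₀^T X₁(u) X₂(u) du`. -/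
def ouF (X : Fin 2 → ℝ → Ω → ℝ) (T : ℝ) (ω : Ω) : ℝ :=
  (1 / Real.sqrt T) * ∫ u in (0:ℝ)..T, X 0 u ω * X 1 u ω

/-- `X̄ᵢ(T) := T^{-1} ∫₀^T Xᵢ(u) du`. -/
def ouXbar (X : Fin 2 → ℝ → Ω → ℝ) (i : Fin 2) (T : ℝ) (ω : Ω) : ℝ :=
  (1 / T) * ∫ u in (0:ℝ)..T, X i u ω

/-- `Y_{ij}(T) := ∫₀^T Xᵢ(u)Xⱼ(u) du − T·X̄ᵢ(T)·X̄ⱼ(T)`. -/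
def ouY (X : Fin 2 → ℝ → Ω → ℝ) (i j : Fin 2) (T : ℝ) (ω : Ω) : ℝ :=
  (∫ u in (0:ℝ)..T, X i u ω * X j u ω) - T * ouXbar X i T ω * ouXbar X j T ω

/-- Yule's nonsense correlation `ρ(T)`. -/
def ouRho (X : Fin 2 → ℝ → Ω → ℝ) (T : ℝ) (ω : Ω) : ℝ :=
  ouY X 0 1 T ω / Real.sqrt (ouY X 0 0 T ω * ouY X 1 1 T ω)

/-- `A(n) := (√Tₙ/n) Σ_{k<n} X₁(kΔ)X₂(kΔ)` with `Tₙ = nΔ`. -/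
def ouA (X : Fin 2 → ℝ → Ω → ℝ) (n : ℕ) (Δ : ℝ) (ω : Ω) : ℝ :=
  (Real.sqrt (n * Δ) / n) * ∑ k ∈ Finset.range n, X 0 (k * Δ) ω * X 1 (k * Δ) ω

/-- `X̃ᵢ(n) := n^{-1} Σ_{k<n} Xᵢ(kΔ)`. -/
def ouXtilde (X : Fin 2 → ℝ → Ω → ℝ) (i : Fin 2) (n : ℕ) (Δ : ℝ) (ω : Ω) : ℝ :=
  (1 / n) * ∑ k ∈ Finset.range n, X i (k * Δ) ω

/-- `Ỹ_{ij}(n) := Δ Σ_{k<n} Xᵢ(kΔ)Xⱼ(kΔ) − Tₙ·X̃ᵢ(n)·X̃ⱼ(n)` with `Tₙ = nΔ`. -/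
def ouYtilde (X : Fin 2 → ℝ → Ω → ℝ) (i j : Fin 2) (n : ℕ) (Δ : ℝ) (ω : Ω) : ℝ :=
  Δ * ∑ k ∈ Finset.range n, X i (k * Δ) ω * X j (k * Δ) ω
    - (n * Δ) * ouXtilde X i n Δ ω * ouXtilde X j n Δ ω

/-- Yule's discrete nonsense correlation `ρ̃(n)`. -/
def ouRhoTilde (X : Fin 2 → ℝ → Ω → ℝ) (n : ℕ) (Δ : ℝ) (ω : Ω) : ℝ :=
  ouYtilde X 0 1 n Δ ω / Real.sqrt (ouYtilde X 0 0 n Δ ω * ouYtilde X 1 1 n Δ ω)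

/-
The values `x 0, …, x (n - 1)` of an Ornstein–Uhlenbeck process on a grid of mesh `Δ` form a
centered Gaussian vector whose covariance matrix has absolute row sums of order `b = 1 + 1 / Δ`.
By Gershgorin's theorem its eigenvalues are at most `b`, so in principal axes `∑ (x k ^ 2 - Var)`
becomes a sum of independent centered squares of Gaussians of variance at most `b`. Bernstein's
method then yields exponential tails at scale `b / n` for the averages of `x k` and of
`x k ^ 2 - Var`, and by polarization for the averages of products of two independent such vectors.
When `log n = o(n Δₙ)` these tails are summable, and by Borel–Cantelli almost surely both sample
means and the mixed second moment tend to `0` while the second moments tend to `1 / (2 θ)`. The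
factor `n Δₙ` cancels in `ρ̃(n)`, which is therefore a quotient of a null sequence by a sequence
with a positive limit.
-/

section SubExponential

variable {Ω' : Type*} {mΩ' : MeasurableSpace Ω'} {P : Measure Ω'} {X : Ω' → ℝ} {a a' c c' : ℝ}

/-- Sub-exponential tails with variance proxy `a` and scale `c`: the moment generating function is
finite and at most `exp (a * t ^ 2)` on the interval `|t| * c ≤ 1`. It is the hypothesis of
Bernstein's inequality. -/
structure HasSubExpMGF (X : Ω' → ℝ) (a c : ℝ) (P : Measure Ω') : Prop where
  integrable_exp_mul : ∀ ⦃t : ℝ⦄, |t| * c ≤ 1 → Integrable (fun ω => exp (t * X ω)) P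
  mgf_le : ∀ ⦃t : ℝ⦄, |t| * c ≤ 1 → mgf X P t ≤ exp (a * t ^ 2)

namespace HasSubExpMGF

lemma mono (h : HasSubExpMGF X a c P) (ha : a ≤ a') (hc : c ≤ c') : HasSubExpMGF X a' c' P where
  integrable_exp_mul t ht :=
    h.integrable_exp_mul ((mul_le_mul_of_nonneg_left hc (abs_nonneg t)).trans ht)
  mgf_le t ht := (h.mgf_le ((mul_le_mul_of_nonneg_left hc (abs_nonneg t)).trans ht)).trans
    (exp_le_exp.mpr (mul_le_mul_of_nonneg_right ha (sq_nonneg t)))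

lemma const_mul (h : HasSubExpMGF X a c P) (r : ℝ) :
    HasSubExpMGF (fun ω => r * X ω) (r ^ 2 * a) (|r| * c) P where
  integrable_exp_mul t ht := by
    simpa only [mul_assoc] using
      h.integrable_exp_mul (t := t * r) (by rwa [abs_mul, mul_assoc])
  mgf_le t ht := by
    rw [mgf_const_mul, mul_comm r t]
    exact (h.mgf_le (by rwa [abs_mul, mul_assoc])).trans_eq (by ring_nf)

lemma sum_of_iIndepFun [IsProbabilityMeasure P] {ι : Type*} [Fintype ι] {X : ι → Ω' → ℝ}
    {a : ι → ℝ} (hindep : iIndepFun X P) (hX : ∀ i, AEMeasurable (X i) P)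
    (h : ∀ i, HasSubExpMGF (X i) (a i) c P) :
    HasSubExpMGF (fun ω => ∑ i, X i ω) (∑ i, a i) c P := by
  have mgf_eq (t : ℝ) : mgf (fun ω => ∑ i, X i ω) P t = ∏ i, mgf (X i) P t := by
    rw [← hindep.mgf_sum₀ hX univ]
    congr 1
    ext ω
    exact (Finset.sum_apply ω univ X).symm
  refine ⟨fun t ht => ?_, fun t ht => ?_⟩
  · rw [← mgf_pos_iff, mgf_eq]
    exact prod_pos fun i _ => mgf_pos ((h i).integrable_exp_mul ht)
  · rw [mgf_eq, Finset.sum_mul, exp_sum]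
    exact prod_le_prod (fun i _ => mgf_nonneg) fun i _ => (h i).mgf_le ht

lemma measureReal_le_abs_le (h : HasSubExpMGF X a c P) [IsFiniteMeasure P] {t : ℝ} (ht : 0 ≤ t)
    (htc : t * c ≤ 1) (ε : ℝ) :
    P.real {ω | ε ≤ |X ω|} ≤ 2 * exp (a * t ^ 2 - t * ε) := by
  have htc' : |t| * c ≤ 1 := by rwa [abs_of_nonneg ht]
  have htc'' : |-t| * c ≤ 1 := by rwa [abs_neg]
  have upper : P.real {ω | ε ≤ X ω} ≤ exp (a * t ^ 2 - t * ε) := by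
    refine (measure_ge_le_exp_mul_mgf ε ht (h.integrable_exp_mul htc')).trans ?_
    rw [sub_eq_neg_add, exp_add, neg_mul]
    gcongr
    exact h.mgf_le htc'
  have lower : P.real {ω | X ω ≤ -ε} ≤ exp (a * t ^ 2 - t * ε) := by
    refine (measure_le_le_exp_mul_mgf (-ε) (neg_nonpos.mpr ht)
      (h.integrable_exp_mul htc'')).trans ?_
    rw [sub_eq_neg_add, exp_add, neg_neg, mul_neg]
    gcongr
    simpa only [neg_sq] using h.mgf_le htc''
  have subset : {ω | ε ≤ |X ω|} ⊆ {ω | ε ≤ X ω} ∪ {ω | X ω ≤ -ε} :=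
    fun ω (hω : ε ≤ |X ω|) => (le_abs.mp hω).imp_right le_neg_of_le_neg
  calc P.real {ω | ε ≤ |X ω|}
      ≤ P.real {ω | ε ≤ X ω} + P.real {ω | X ω ≤ -ε} :=
        (measureReal_mono subset).trans (measureReal_union_le _ _)
    _ ≤ 2 * exp (a * t ^ 2 - t * ε) := by linarith

end HasSubExpMGF

-- Borel–Cantelli along the levels `ε = 1 / (m + 1)`.
lemma ae_tendsto_zero_of_summable_measureReal [IsFiniteMeasure P] {R : ℕ → Ω' → ℝ}
    (h : ∀ ε > 0, Summable fun n => P.real {ω | ε ≤ |R n ω|}) :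
    ∀ᵐ ω ∂P, Tendsto (fun n => R n ω) atTop (𝓝 0) := by
  have eventually_lt (m : ℕ) : ∀ᵐ ω ∂P, ∀ᶠ n in atTop, |R n ω| < 1 / ((m : ℝ) + 1) := by
    have hsum := (h (1 / ((m : ℝ) + 1)) (by positivity)).tsum_ofReal_ne_top
    simp only [ofReal_measureReal (measure_ne_top P _)] at hsum
    filter_upwards [ae_eventually_notMem hsum] with ω hω
    filter_upwards [hω] with n hn using not_le.mp hn
  filter_upwards [ae_all_iff.mpr eventually_lt] with ω hω
  rw [Metric.tendsto_nhds]
  intro ε hε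
  obtain ⟨m, hm⟩ := exists_nat_one_div_lt hε
  filter_upwards [hω m] with n hn
  rw [Real.dist_eq, sub_zero]
  exact hn.trans hm

lemma ae_tendsto_zero_of_hasSubExpMGF [IsFiniteMeasure P] {R : ℕ → Ω' → ℝ} {r : ℕ → ℝ}
    (hR : ∀ᶠ n in atTop, HasSubExpMGF (R n) (a * r n) (r n) P)
    (hr : Tendsto (fun n => r n * log n) atTop (𝓝 0)) :
    ∀ᵐ ω ∂P, Tendsto (fun n => R n ω) atTop (𝓝 0) := by
  refine ae_tendsto_zero_of_summable_measureReal fun ε hε => ?_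
  have hscale : Tendsto (fun n : ℕ => 3 / ε * (r n * log n)) atTop (𝓝 0) := by
    simpa using hr.const_mul (3 / ε)
  have hproxy : Tendsto (fun n : ℕ => a * (3 / ε) ^ 2 * (r n * log n)) atTop (𝓝 0) := by
    simpa using hr.const_mul (a * (3 / ε) ^ 2)
  refine summable_of_isBigO_nat (Real.summable_nat_rpow.mpr (by norm_num : (-2 : ℝ) < -1))
    (.of_bound 2 ?_)
  filter_upwards [hR, hscale.eventually_le_const one_pos, hproxy.eventually_le_const one_pos,
    eventually_ge_atTop 1] with n hn hscale hproxy hn1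
  have : 0 ≤ log n := log_nonneg (by exact_mod_cast hn1)
  rw [norm_of_nonneg measureReal_nonneg, norm_of_nonneg (by positivity),
    rpow_def_of_pos (by exact_mod_cast hn1)]
  -- With `t = (3 / ε) log n` the Chernoff bound is `2 exp (-3 log n + o(log n))`.
  refine (hn.measureReal_le_abs_le (t := 3 / ε * log n) (by positivity)
    (by linarith) ε).trans ?_
  gcongr
  calc a * r n * (3 / ε * log n) ^ 2 - 3 / ε * log n * ε
      = a * (3 / ε) ^ 2 * (r n * log n) * log n - 3 * log n := by field_simp
    _ ≤ 1 * log n - 3 * log n := by gcongr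
    _ = log n * -2 := by ring

end SubExponential

section Gaussian

variable {Ω' : Type*} {mΩ' : MeasurableSpace Ω'} {P : Measure Ω'} {X : Ω' → ℝ}

lemma mgf_sq_gaussianReal {v : ℝ≥0} {s : ℝ} (hs : 2 * s * v < 1) :
    mgf (fun x => x ^ 2) (gaussianReal 0 v) s = (√(1 - 2 * s * v))⁻¹ := by
  rcases eq_or_ne v 0 with rfl | hv
  · simp [mgf]
  have : (0 : ℝ) < v := by positivity
  have density_mul_exp (x : ℝ) : gaussianPDFReal 0 v x • exp (s * x ^ 2) =
      (√(2 * π * v))⁻¹ * exp (-((1 - 2 * s * v) / (2 * v)) * x ^ 2) := by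
    rw [gaussianPDFReal, smul_eq_mul, mul_assoc, ← exp_add]
    congr 2
    field_simp
    ring
  have hquot : π / ((1 - 2 * s * v) / (2 * v)) = 2 * π * v * (1 - 2 * s * v)⁻¹ := by field_simp
  rw [mgf, integral_gaussianReal_eq_integral_smul hv]
  simp only [density_mul_exp]
  rw [integral_const_mul, integral_gaussian, hquot,
    sqrt_mul (x := 2 * π * v) (by positivity), sqrt_inv, inv_mul_cancel_left₀ (by positivity)]

lemma exp_neg_add_two_mul_sq_le {u : ℝ} (hu : u ≤ 1 / 2) : exp (-(u + 2 * u ^ 2)) ≤ 1 - u := by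
  have hpos : 0 < 1 - u := by linarith
  rw [← le_log_iff_exp_le hpos]
  refine le_trans ?_ (one_sub_inv_le_log_of_pos hpos)
  rw [← sub_nonneg]
  have : 1 - (1 - u)⁻¹ - -(u + 2 * u ^ 2) = u ^ 2 * (1 - 2 * u) / (1 - u) := by
    field_simp
    ring
  rw [this]
  exact div_nonneg (mul_nonneg (sq_nonneg u) (by linarith)) hpos.le

lemma hasSubExpMGF_sq_sub_variance (hX : HasGaussianLaw X P) (h0 : P[X] = 0) :
    HasSubExpMGF (fun ω => X ω ^ 2 - Var[X; P]) (4 * Var[X; P] ^ 2) (4 * Var[X; P]) P := by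
  have := hX.isProbabilityMeasure
  have hvar : 0 ≤ Var[X; P] := variance_nonneg X P
  have two_mul_le {t : ℝ} (ht : |t| * (4 * Var[X; P]) ≤ 1) : 2 * t * Var[X; P] ≤ 1 / 2 := by
    have := mul_le_mul_of_nonneg_right (le_abs_self t) hvar
    linarith
  have mgf_eq {t : ℝ} (ht : 2 * t * Var[X; P] ≤ 1 / 2) :
      mgf (fun ω => X ω ^ 2 - Var[X; P]) P t =
        (√(1 - 2 * t * Var[X; P]))⁻¹ * exp (t * -Var[X; P]) := by
    have hlaw : P.map X = gaussianReal 0 Var[X; P].toNNReal := by rw [hX.map_eq_gaussianReal, h0]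
    have hmap : mgf (fun ω => X ω ^ 2) P t = mgf (fun x => x ^ 2) (P.map X) t := by
      rw [mgf_map hX.aemeasurable (by fun_prop)]
      rfl
    simp only [sub_eq_add_neg, mgf_add_const]
    rw [hmap, hlaw, mgf_sq_gaussianReal (by rw [coe_toNNReal _ hvar]; linarith),
      coe_toNNReal _ hvar, sub_eq_add_neg]
  refine ⟨fun t ht => ?_, fun t ht => ?_⟩
  · have hpos : 0 < 1 - 2 * t * Var[X; P] := by linarith [two_mul_le ht]
    rw [← mgf_pos_iff, mgf_eq (two_mul_le ht)]
    positivity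
  · have hexp : exp (-(t * Var[X; P] + 4 * t ^ 2 * Var[X; P] ^ 2)) ≤
        √(1 - 2 * t * Var[X; P]) := by
      refine le_sqrt_of_sq_le (le_trans (le_of_eq ?_)
        (exp_neg_add_two_mul_sq_le (two_mul_le ht)))
      rw [← exp_nat_mul]
      ring_nf
    calc mgf (fun ω => X ω ^ 2 - Var[X; P]) P t
        = (√(1 - 2 * t * Var[X; P]))⁻¹ * exp (t * -Var[X; P]) := mgf_eq (two_mul_le ht)
      _ ≤ (exp (-(t * Var[X; P] + 4 * t ^ 2 * Var[X; P] ^ 2)))⁻¹ * exp (t * -Var[X; P]) := by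
        gcongr
      _ = exp (4 * Var[X; P] ^ 2 * t ^ 2) := by
        rw [← exp_neg, ← exp_add]
        ring_nf

lemma hasSubExpMGF_of_hasGaussianLaw (hX : HasGaussianLaw X P) (h0 : P[X] = 0) (c : ℝ) :
    HasSubExpMGF X (Var[X; P] / 2) c P := by
  have := hX.isProbabilityMeasure
  have mgf_eq (t : ℝ) : mgf X P t = exp (Var[X; P] / 2 * t ^ 2) := by
    rw [mgf_gaussianReal hX.map_eq_gaussianReal, h0, coe_toNNReal _ (variance_nonneg X P)]
    ring_nf
  refine ⟨fun t _ => ?_, fun t _ => (mgf_eq t).le⟩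
  rw [← mgf_pos_iff, mgf_eq]
  positivity

end Gaussian

section PrincipalComponents

lemma eigenvalues_le_of_sum_abs_le {ι : Type*} [Fintype ι] [DecidableEq ι] {A : Matrix ι ι ℝ}
    (hA : A.IsHermitian) {b : ℝ} (hb : ∀ i, ∑ j, |A i j| ≤ b) (i : ι) : hA.eigenvalues i ≤ b := by
  have hasEigenvalue : Module.End.HasEigenvalue (Matrix.toLin' A) (hA.eigenvalues i) := by
    rw [Module.End.hasEigenvalue_iff_mem_spectrum, Matrix.spectrum_toLin']
    exact hA.eigenvalues_mem_spectrum_real i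
  obtain ⟨k, hk⟩ := eigenvalue_mem_ball hasEigenvalue
  simp only [mem_closedBall_iff_norm, norm_eq_abs] at hk
  calc hA.eigenvalues i
      = A k k + (hA.eigenvalues i - A k k) := by ring
    _ ≤ |A k k| + ∑ j ∈ univ.erase k, |A k j| :=
        add_le_add (le_abs_self _) ((le_abs_self _).trans hk)
    _ = ∑ j, |A k j| := add_sum_erase _ (fun j => |A k j|) (mem_univ k)
    _ ≤ b := hb k

variable {Ω' ι : Type*} {mΩ' : MeasurableSpace Ω'} {P : Measure Ω'} {X : ι → Ω' → ℝ}

/-- The covariance matrix of a family of square-integrable random variables. -/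
def covarianceMatrix (X : ι → Ω' → ℝ) (P : Measure Ω') : Matrix ι ι ℝ :=
  .of fun i j => cov[X i, X j; P]

lemma isHermitian_covarianceMatrix : (covarianceMatrix X P).IsHermitian :=
  Matrix.IsHermitian.ext fun i j => covariance_comm (X j) (X i)

variable [Fintype ι]

lemma covarianceMatrix_mulVec [IsFiniteMeasure P] {κ : Type*} (hX : ∀ i, MemLp (X i) 2 P)
    (A : Matrix κ ι ℝ) :
    covarianceMatrix (fun k ω => A.mulVec (X · ω) k) P =
      A * covarianceMatrix X P * A.transpose := by
  ext k l
  simp only [covarianceMatrix, Matrix.mulVec, dotProduct, Matrix.mul_apply, Matrix.of_apply,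
    Matrix.transpose_apply]
  rw [covariance_fun_sum_fun_sum (fun i => (hX i).const_mul _) fun i => (hX i).const_mul _,
    Finset.sum_comm]
  simp only [covariance_const_mul_left, covariance_const_mul_right, Finset.sum_mul]
  exact sum_congr rfl fun _ _ => sum_congr rfl fun _ _ => by ring

variable [DecidableEq ι]

/-- The orthogonal matrix whose rows form an eigenbasis of the covariance matrix of `X`. -/
def principalAxes (X : ι → Ω' → ℝ) (P : Measure Ω') : Matrix ι ι ℝ :=
  star (isHermitian_covarianceMatrix (X := X) (P := P)).eigenvectorUnitary

/-- The principal components of the random vector `X`: its coordinates along the principal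
axes. -/
def principalComponent (X : ι → Ω' → ℝ) (P : Measure Ω') (i : ι) (ω : Ω') : ℝ :=
  (principalAxes X P).mulVec (X · ω) i

/-- The variances of the principal components, that is, the eigenvalues of the covariance
matrix. -/
def principalVariance (X : ι → Ω' → ℝ) (P : Measure Ω') : ι → ℝ :=
  (isHermitian_covarianceMatrix (X := X) (P := P)).eigenvalues

lemma sum_principalComponent_sq (ω : Ω') :
    ∑ i, principalComponent X P i ω ^ 2 = ∑ i, X i ω ^ 2 := by
  have orthogonal : (principalAxes X P).transpose * principalAxes X P = 1 :=
    Unitary.coe_mul_star_self isHermitian_covarianceMatrix.eigenvectorUnitary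
  have sum_sq (f : ι → ℝ) : ∑ i, f i ^ 2 = f ⬝ᵥ f := by simp only [dotProduct, sq]
  calc ∑ i, principalComponent X P i ω ^ 2
      = (principalAxes X P).mulVec (X · ω) ⬝ᵥ (principalAxes X P).mulVec (X · ω) := sum_sq _
    _ = ∑ i, X i ω ^ 2 := by
      rw [Matrix.dotProduct_mulVec, ← Matrix.mulVec_transpose, Matrix.mulVec_mulVec, orthogonal,
        Matrix.one_mulVec, sum_sq]

lemma sum_principalVariance : ∑ i, principalVariance X P i = ∑ i, cov[X i, X i; P] :=
  (isHermitian_covarianceMatrix (X := X) (P := P)).trace_eq_sum_eigenvalues.symm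

lemma covarianceMatrix_principalComponent [IsFiniteMeasure P] (hX : ∀ i, MemLp (X i) 2 P) :
    covarianceMatrix (principalComponent X P) P = Matrix.diagonal (principalVariance X P) := by
  have hdiag := (isHermitian_covarianceMatrix (X := X)
    (P := P)).conjStarAlgAut_star_eigenvectorUnitary
  rw [Unitary.conjStarAlgAut_star_apply] at hdiag
  exact (covarianceMatrix_mulVec hX (principalAxes X P)).trans hdiag

lemma covariance_principalComponent [IsFiniteMeasure P] (hX : ∀ i, MemLp (X i) 2 P) (i j : ι) :
    cov[principalComponent X P i, principalComponent X P j; P] =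
      if i = j then principalVariance X P i else 0 :=
  congrFun₂ (covarianceMatrix_principalComponent hX) i j

lemma hasGaussianLaw_principalComponent (hX : HasGaussianLaw (fun ω i => X i ω) P) :
    HasGaussianLaw (fun ω i => principalComponent X P i ω) P :=
  hX.map (Matrix.mulVecLin (principalAxes X P)).toContinuousLinearMap

lemma iIndepFun_principalComponent (hX : HasGaussianLaw (fun ω i => X i ω) P) :
    iIndepFun (principalComponent X P) P := by
  have := hX.isProbabilityMeasure
  refine (hasGaussianLaw_principalComponent hX).iIndepFun_of_covariance_eq_zero fun i j hij => ?_
  rw [covariance_principalComponent (fun i => (hX.eval i).memLp_two), if_neg hij]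

lemma integral_principalComponent (hX : ∀ i, Integrable (X i) P) (h0 : ∀ i, ∫ ω, X i ω ∂P = 0)
    (i : ι) : ∫ ω, principalComponent X P i ω ∂P = 0 := by
  simp only [principalComponent, Matrix.mulVec, dotProduct]
  rw [integral_finsetSum _ fun j _ => (hX j).const_mul _]
  simp only [integral_const_mul, h0, mul_zero, sum_const_zero]

end PrincipalComponents

section WeaklyCorrelated

variable {Ω' ι : Type*} {mΩ' : MeasurableSpace Ω'} {P : Measure Ω'} [Fintype ι]
  {x y : ι → Ω' → ℝ} {V W b c : ℝ}

/-- A centered Gaussian vector whose coordinates have variance at most `V` and whose covariance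
matrix has absolute row sums at most `b`. -/
structure IsWeaklyCorrelatedGaussian (x : ι → Ω' → ℝ) (V b : ℝ) (P : Measure Ω') : Prop where
  hasGaussianLaw : HasGaussianLaw (fun ω i => x i ω) P
  integral_eq_zero : ∀ i, ∫ ω, x i ω ∂P = 0
  variance_le : ∀ i, Var[x i; P] ≤ V
  sum_abs_covariance_le : ∀ i, ∑ j, |cov[x i, x j; P]| ≤ b

namespace IsWeaklyCorrelatedGaussian

lemma memLp_two (h : IsWeaklyCorrelatedGaussian x V b P) (i : ι) : MemLp (x i) 2 P :=
  (h.hasGaussianLaw.eval i).memLp_two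

lemma variance_add_of_indepFun (hx : IsWeaklyCorrelatedGaussian x V b P)
    (hy : IsWeaklyCorrelatedGaussian y W c P)
    (hxy : IndepFun (fun ω i => x i ω) (fun ω i => y i ω) P) (i : ι) :
    Var[fun ω => x i ω + y i ω; P] = Var[x i; P] + Var[y i; P] :=
  IndepFun.variance_fun_add (hx.memLp_two i) (hy.memLp_two i)
    (hxy.comp (measurable_pi_apply i) (measurable_pi_apply i))

lemma add_of_indepFun (hx : IsWeaklyCorrelatedGaussian x V b P)
    (hy : IsWeaklyCorrelatedGaussian y W c P)
    (hxy : IndepFun (fun ω i => x i ω) (fun ω i => y i ω) P) :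
    IsWeaklyCorrelatedGaussian (fun i ω => x i ω + y i ω) (V + W) (b + c) P := by
  have := hx.hasGaussianLaw.isProbabilityMeasure
  have cov_eq_zero (i j : ι) : cov[x i, y j; P] = 0 :=
    (hxy.comp (measurable_pi_apply i) (measurable_pi_apply j)).covariance_eq_zero
      (hx.memLp_two i) (hy.memLp_two j)
  have cov_add (i j : ι) : cov[fun ω => x i ω + y i ω, fun ω => x j ω + y j ω; P] =
      cov[x i, x j; P] + cov[y i, y j; P] := by
    change cov[x i + y i, x j + y j; P] = _
    rw [covariance_add_left (hx.memLp_two i) (hy.memLp_two i)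
        ((hx.memLp_two j).add (hy.memLp_two j)),
      covariance_add_right (hx.memLp_two i) (hx.memLp_two j) (hy.memLp_two j),
      covariance_add_right (hy.memLp_two i) (hx.memLp_two j) (hy.memLp_two j),
      cov_eq_zero i j, covariance_comm (y i) (x j), cov_eq_zero j i, add_zero, zero_add]
  refine ⟨?_, fun i => ?_, fun i => ?_, fun i => ?_⟩
  · exact (hxy.hasGaussianLaw hx.hasGaussianLaw hy.hasGaussianLaw).fun_add
  · rw [integral_add ((hx.memLp_two i).integrable one_le_two)
      ((hy.memLp_two i).integrable one_le_two), hx.integral_eq_zero, hy.integral_eq_zero, add_zero]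
  · rw [variance_add_of_indepFun hx hy hxy i]
    exact add_le_add (hx.variance_le i) (hy.variance_le i)
  · calc ∑ j, |cov[fun ω => x i ω + y i ω, fun ω => x j ω + y j ω; P]|
        ≤ ∑ j, (|cov[x i, x j; P]| + |cov[y i, y j; P]|) := by
          simp only [cov_add]
          exact sum_le_sum fun j _ => abs_add_le _ _
      _ ≤ b + c := by
          rw [sum_add_distrib]
          exact add_le_add (hx.sum_abs_covariance_le i) (hy.sum_abs_covariance_le i)

lemma variance_sum_le (h : IsWeaklyCorrelatedGaussian x V b P) :
    Var[fun ω => ∑ i, x i ω; P] ≤ Fintype.card ι * b := by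
  have := h.hasGaussianLaw.isProbabilityMeasure
  calc Var[fun ω => ∑ i, x i ω; P]
      = ∑ i, ∑ j, cov[x i, x j; P] := variance_fun_sum h.memLp_two
    _ ≤ ∑ i, ∑ j, |cov[x i, x j; P]| := by gcongr; exact le_abs_self _
    _ ≤ ∑ _i : ι, b := sum_le_sum fun i _ => h.sum_abs_covariance_le i
    _ = Fintype.card ι * b := by rw [sum_const, card_univ, nsmul_eq_mul]

-- By orthogonality `∑ i, x i ^ 2` is the sum of the squares of the principal components, which
-- are independent.
lemma hasSubExpMGF_sum_sq_sub (h : IsWeaklyCorrelatedGaussian x V b P) :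
    HasSubExpMGF (fun ω => ∑ i, (x i ω ^ 2 - Var[x i; P])) (4 * b * ∑ i, Var[x i; P]) (4 * b)
      P := by
  classical
  have := h.hasGaussianLaw.isProbabilityMeasure
  have hgauss (i : ι) : HasGaussianLaw (principalComponent x P i) P :=
    (hasGaussianLaw_principalComponent h.hasGaussianLaw).eval i
  have hcenter := integral_principalComponent (fun i => (h.memLp_two i).integrable one_le_two)
    h.integral_eq_zero
  have variance_eq (i : ι) : Var[principalComponent x P i; P] = principalVariance x P i := by
    rw [← covariance_self (hgauss i).aemeasurable, covariance_principalComponent h.memLp_two,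
      if_pos rfl]
  have variance_le (i : ι) : principalVariance x P i ≤ b :=
    eigenvalues_le_of_sum_abs_le _ h.sum_abs_covariance_le i
  have sum_eq : ∑ i, principalVariance x P i = ∑ i, Var[x i; P] := by
    rw [sum_principalVariance]
    exact sum_congr rfl fun i _ => covariance_self (h.memLp_two i).aemeasurable
  have hsum := HasSubExpMGF.sum_of_iIndepFun (c := 4 * b)
    ((iIndepFun_principalComponent h.hasGaussianLaw).comp
      (fun i t => t ^ 2 - principalVariance x P i) fun i => by fun_prop)
    (fun i => ((hgauss i).aemeasurable.pow_const 2).sub_const _)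
    (a := fun i => 4 * b * principalVariance x P i) fun i => by
      have hsq := hasSubExpMGF_sq_sub_variance (hgauss i) (hcenter i)
      have hnonneg := variance_nonneg (principalComponent x P i) P
      rw [variance_eq] at hsq hnonneg
      exact hsq.mono (by nlinarith [variance_le i]) (by linarith [variance_le i])
  convert hsum using 1
  · ext ω
    simp only [Function.comp_apply, sum_sub_distrib, sum_principalComponent_sq, sum_eq]
  · rw [← mul_sum, sum_eq]

open scoped BigOperators

variable [Nonempty ι]

lemma hasSubExpMGF_expect (h : IsWeaklyCorrelatedGaussian x V b P) :
    HasSubExpMGF (fun ω => 𝔼 i, x i ω) (1 / 8 * (4 * b / Fintype.card ι))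
      (4 * b / Fintype.card ι) P := by
  have := h.hasGaussianLaw.isProbabilityMeasure
  have hcard : (0 : ℝ) < Fintype.card ι := by exact_mod_cast Fintype.card_pos
  have hcenter : ∫ ω, ∑ i, x i ω ∂P = 0 := by
    rw [integral_finsetSum _ fun i _ => (h.memLp_two i).integrable one_le_two]
    exact sum_eq_zero fun i _ => h.integral_eq_zero i
  simp only [Fintype.expect_eq_sum_div_card, div_eq_inv_mul (∑ _, _)]
  refine ((hasSubExpMGF_of_hasGaussianLaw h.hasGaussianLaw.fun_sum hcenter (4 * b)).const_mul
    _).mono ?_ ?_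
  · calc ((Fintype.card ι : ℝ)⁻¹) ^ 2 * (Var[fun ω => ∑ i, x i ω; P] / 2)
        ≤ ((Fintype.card ι : ℝ)⁻¹) ^ 2 * (Fintype.card ι * b / 2) := by
          gcongr
          exact h.variance_sum_le
      _ = 1 / 8 * (4 * b / Fintype.card ι) := by field_simp; ring
  · rw [abs_of_pos (inv_pos.mpr hcard), div_eq_inv_mul]

lemma hasSubExpMGF_expect_sq_sub (h : IsWeaklyCorrelatedGaussian x V b P) :
    HasSubExpMGF (fun ω => 𝔼 i, (x i ω ^ 2 - Var[x i; P])) (V * (4 * b / Fintype.card ι))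
      (4 * b / Fintype.card ι) P := by
  have hcard : (0 : ℝ) < Fintype.card ι := by exact_mod_cast Fintype.card_pos
  have hb : 0 ≤ b := (sum_nonneg fun j _ => abs_nonneg _).trans
    (h.sum_abs_covariance_le (Classical.arbitrary ι))
  have hsum : ∑ i, Var[x i; P] ≤ Fintype.card ι * V := by
    rw [← nsmul_eq_mul]
    exact sum_le_card_nsmul _ _ _ fun i _ => h.variance_le i
  simp only [Fintype.expect_eq_sum_div_card, div_eq_inv_mul (∑ _, _)]
  refine (h.hasSubExpMGF_sum_sq_sub.const_mul _).mono ?_ ?_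
  · calc ((Fintype.card ι : ℝ)⁻¹) ^ 2 * (4 * b * ∑ i, Var[x i; P])
        ≤ ((Fintype.card ι : ℝ)⁻¹) ^ 2 * (4 * b * (Fintype.card ι * V)) := by gcongr
      _ = V * (4 * b / Fintype.card ι) := by field_simp
  · rw [abs_of_pos (inv_pos.mpr hcard), div_eq_inv_mul]

end IsWeaklyCorrelatedGaussian

end WeaklyCorrelated

section TriangularArrays

open scoped BigOperators

variable {Ω' : Type*} {mΩ' : MeasurableSpace Ω'} {P : Measure Ω'} {x y : ∀ n : ℕ, Fin n → Ω' → ℝ}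
  {V W : ℝ} {b c : ℕ → ℝ}

lemma ae_tendsto_expect [IsFiniteMeasure P]
    (hx : ∀ᶠ n in atTop, IsWeaklyCorrelatedGaussian (x n) V (b n) P)
    (hb : Tendsto (fun n => b n * log n / n) atTop (𝓝 0)) :
    ∀ᵐ ω ∂P, Tendsto (fun n => 𝔼 k, x n k ω) atTop (𝓝 0) := by
  refine ae_tendsto_zero_of_hasSubExpMGF (a := 1 / 8) (r := fun n => 4 * b n / n) ?_ ?_
  · filter_upwards [hx, eventually_gt_atTop 0] with n hn hpos
    have : Nonempty (Fin n) := ⟨⟨0, hpos⟩⟩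
    simpa only [Fintype.card_fin] using hn.hasSubExpMGF_expect
  · simpa only [mul_zero] using (hb.const_mul 4).congr fun n => by ring

lemma ae_tendsto_expect_sq_sub_variance [IsFiniteMeasure P]
    (hx : ∀ᶠ n in atTop, IsWeaklyCorrelatedGaussian (x n) V (b n) P)
    (hb : Tendsto (fun n => b n * log n / n) atTop (𝓝 0)) :
    ∀ᵐ ω ∂P, Tendsto (fun n => 𝔼 k, (x n k ω ^ 2 - Var[x n k; P])) atTop (𝓝 0) := by
  refine ae_tendsto_zero_of_hasSubExpMGF (a := V) (r := fun n => 4 * b n / n) ?_ ?_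
  · filter_upwards [hx, eventually_gt_atTop 0] with n hn hpos
    have : Nonempty (Fin n) := ⟨⟨0, hpos⟩⟩
    simpa only [Fintype.card_fin] using hn.hasSubExpMGF_expect_sq_sub
  · simpa only [mul_zero] using (hb.const_mul 4).congr fun n => by ring

-- Polarization: `2xy = (x + y)² - x² - y²`, and the variances of `x` and `y` add up.
lemma ae_tendsto_expect_mul_of_indepFun [IsFiniteMeasure P]
    (hx : ∀ᶠ n in atTop, IsWeaklyCorrelatedGaussian (x n) V (b n) P)
    (hb : Tendsto (fun n => b n * log n / n) atTop (𝓝 0))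
    (hy : ∀ᶠ n in atTop, IsWeaklyCorrelatedGaussian (y n) W (c n) P)
    (hc : Tendsto (fun n => c n * log n / n) atTop (𝓝 0))
    (hxy : ∀ᶠ n in atTop, IndepFun (fun ω k => x n k ω) (fun ω k => y n k ω) P) :
    ∀ᵐ ω ∂P, Tendsto (fun n => 𝔼 k, x n k ω * y n k ω) atTop (𝓝 0) := by
  have hadd : ∀ᶠ n in atTop, IsWeaklyCorrelatedGaussian
      (fun k ω => x n k ω + y n k ω) (V + W) (b n + c n) P := by
    filter_upwards [hx, hy, hxy] with n hx hy hxy using hx.add_of_indepFun hy hxy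
  have hbc : Tendsto (fun n => (b n + c n) * log n / n) atTop (𝓝 0) := by
    simpa only [add_zero] using (hb.add hc).congr fun n => by ring
  filter_upwards [ae_tendsto_expect_sq_sub_variance hadd hbc,
    ae_tendsto_expect_sq_sub_variance hx hb, ae_tendsto_expect_sq_sub_variance hy hc]
    with ω hω_add hω_x hω_y
  have hlim := ((hω_add.sub hω_x).sub hω_y).div_const 2
  rw [sub_zero, sub_zero, zero_div] at hlim
  refine hlim.congr' ?_
  filter_upwards [hx, hy, hxy] with n hx hy hxy
  rw [← expect_sub_distrib, ← expect_sub_distrib, expect_div]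
  refine expect_congr rfl fun k _ => ?_
  rw [hx.variance_add_of_indepFun hy hxy k]
  ring

end TriangularArrays

section GeometricSums

lemma sum_range_exp_neg_mul_le {x : ℝ} (hx : 0 < x) (n : ℕ) :
    ∑ k ∈ range n, exp (-x * k) ≤ 1 + 1 / x := by
  have hlt : exp (-x) < 1 := exp_lt_one_iff.mpr (neg_lt_zero.mpr hx)
  have hxexp : x ≤ exp x - 1 := by linarith [add_one_le_exp x]
  calc ∑ k ∈ range n, exp (-x * k)
      = ∑ k ∈ range n, exp (-x) ^ k := by simp only [← exp_nat_mul, mul_comm]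
    _ ≤ ∑' k : ℕ, exp (-x) ^ k := (summable_geometric_of_lt_one (exp_pos _).le hlt).sum_le_tsum _
        fun k _ => by positivity
    _ = (1 - exp (-x))⁻¹ := tsum_geometric_of_lt_one (exp_pos _).le hlt
    _ = 1 + 1 / (exp x - 1) := by
      have : exp x - 1 ≠ 0 := by linarith
      rw [exp_neg]
      field_simp
      ring
    _ ≤ 1 + 1 / x := by gcongr

lemma sum_range_exp_neg_mul_abs_sub_le {x : ℝ} (hx : 0 < x) {n j : ℕ} (hj : j ≤ n) :
    ∑ k ∈ range n, exp (-x * |(k : ℝ) - j|) ≤ 2 * (1 + 1 / x) := by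
  have right : ∑ k ∈ Ico j n, exp (-x * |(k : ℝ) - j|) ≤ 1 + 1 / x := by
    rw [sum_Ico_eq_sum_range]
    refine le_of_eq_of_le (sum_congr rfl fun k _ => ?_) (sum_range_exp_neg_mul_le hx (n - j))
    rw [Nat.cast_add, add_sub_cancel_left, abs_of_nonneg k.cast_nonneg]
  have left : ∑ k ∈ range j, exp (-x * |(k : ℝ) - j|) ≤ 1 + 1 / x := by
    rw [← sum_range_reflect]
    refine (sum_le_sum fun k hk => ?_).trans (sum_range_exp_neg_mul_le hx j)
    have hdist : |((j - 1 - k : ℕ) : ℝ) - j| = k + 1 := by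
      have hj : ((j - 1 - k : ℕ) : ℝ) + (k + 1) = j := by
        exact_mod_cast (by have := mem_range.mp hk; omega : j - 1 - k + (k + 1) = j)
      rw [abs_sub_comm, sub_eq_of_eq_add' hj.symm, abs_of_nonneg (by positivity)]
    rw [hdist, exp_le_exp]
    linarith
  rw [← sum_range_add_sum_Ico _ hj]
  linarith

end GeometricSums

section OrnsteinUhlenbeck

open scoped BigOperators

lemma hasGaussianLaw_of_forall_sum_mul {Ω' ι : Type*} {mΩ' : MeasurableSpace Ω'} {P : Measure Ω'}
    [Fintype ι] {x : ι → Ω' → ℝ} (hx : ∀ i, Measurable (x i))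
    (h : ∀ c : ι → ℝ, ∃ (m : ℝ) (v : ℝ≥0), P.map (fun ω => ∑ i, c i * x i ω) = gaussianReal m v) :
    HasGaussianLaw (fun ω i => x i ω) P := by
  classical
  refine ⟨isGaussian_of_map_eq_gaussianReal fun L => ?_⟩
  have hL (ω : Ω') : L (fun i => x i ω) = ∑ i, L (Pi.single i 1) * x i ω := by
    conv_lhs => rw [pi_eq_sum_univ' fun i => x i ω, map_sum]
    simp only [map_smul, smul_eq_mul, mul_comm]
  rw [Measure.map_map (by fun_prop) (by fun_prop)]
  simpa only [Function.comp_def, hL] using h fun i => L (Pi.single i 1)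

/-- The observations `X i (k * Δ)`, `k < n`, of the `i`-th process on a grid of mesh `Δ`. -/
def ouGrid {Ω' : Type} (X : Fin 2 → ℝ → Ω' → ℝ) (i : Fin 2) (n : ℕ) (Δ : ℝ) (k : Fin n) : Ω' → ℝ :=
  X i (k * Δ)

/-- A bound for the absolute row sums of the covariance matrix of an Ornstein–Uhlenbeck process
observed on a grid of mesh `Δ`. -/
def ouRowBound (θ Δ : ℝ) : ℝ := (1 + 1 / (θ * Δ)) / θ

lemma tendsto_ouRowBound_mul_log_div (θ : ℝ) {Δ : ℕ → ℝ}
    (hlog : (fun n : ℕ => log n) =o[atTop] fun n => n * Δ n) :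
    Tendsto (fun n : ℕ => ouRowBound θ (Δ n) * log n / n) atTop (𝓝 0) := by
  have hlim := ((isLittleO_log_id_atTop.tendsto_div_nhds_zero.comp
    tendsto_natCast_atTop_atTop).const_mul (1 / θ)).add
      (hlog.tendsto_div_nhds_zero.const_mul (1 / θ ^ 2))
  rw [mul_zero, mul_zero, add_zero] at hlim
  refine hlim.congr fun n => ?_
  simp only [Function.comp_apply, id_eq, ouRowBound, div_eq_mul_inv, mul_inv]
  ring

namespace IsOUPair

variable {θ Δ s t : ℝ} {X : Fin 2 → ℝ → Ω → ℝ}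

lemma exists_map_eq_gaussianReal (hX : IsOUPair θ X) (i : Fin 2) (ht : 0 ≤ t) :
    ∃ v : ℝ≥0, Measure.map (X i t) ℙ = gaussianReal 0 v := by
  simpa only [univ_unique, sum_singleton, one_mul] using
    hX.gaussian i 1 (fun _ => t) (fun _ => 1) fun _ => ht

lemma memLp_two (hX : IsOUPair θ X) (i : Fin 2) (ht : 0 ≤ t) :
    MemLp (X i t) 2 (ℙ : Measure Ω) := by
  obtain ⟨v, hv⟩ := hX.exists_map_eq_gaussianReal i ht
  exact HasGaussianLaw.memLp_two ⟨hv ▸ inferInstance⟩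

lemma integral_eq_zero (hX : IsOUPair θ X) (i : Fin 2) (ht : 0 ≤ t) : ∫ ω, X i t ω ∂ℙ = 0 := by
  obtain ⟨v, hv⟩ := hX.exists_map_eq_gaussianReal i ht
  have hmean := integral_id_gaussianReal (μ := 0) (v := v)
  rwa [← hv, integral_map (hX.meas i t).aemeasurable (by fun_prop)] at hmean

lemma indepFun_ouGrid (hX : IsOUPair θ X) (n : ℕ) :
    IndepFun (fun ω k => ouGrid X 0 n Δ k ω) (fun ω k => ouGrid X 1 n Δ k ω) ℙ :=
  have hgrid : Measurable fun (f : ℝ → ℝ) (k : Fin n) => f (k * Δ) := by fun_prop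
  hX.indep.comp hgrid hgrid

variable [IsProbabilityMeasure (ℙ : Measure Ω)]

lemma covariance_eq (hX : IsOUPair θ X) (i : Fin 2) (hs : 0 ≤ s) (ht : 0 ≤ t) :
    cov[X i s, X i t; ℙ] = (exp (-θ * |t - s|) - exp (-θ * (t + s))) / (2 * θ) := by
  rw [covariance_eq_sub (hX.memLp_two i hs) (hX.memLp_two i ht), hX.integral_eq_zero i hs,
    zero_mul, sub_zero]
  exact hX.cov i s t hs ht

lemma variance_eq (hX : IsOUPair θ X) (i : Fin 2) (ht : 0 ≤ t) :
    Var[X i t; ℙ] = (1 - exp (-(2 * θ) * t)) / (2 * θ) := by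
  rw [← covariance_self (hX.meas i t).aemeasurable, hX.covariance_eq i ht ht, sub_self, abs_zero,
    mul_zero, exp_zero]
  ring_nf

lemma variance_le (hθ : 0 < θ) (hX : IsOUPair θ X) (i : Fin 2) (ht : 0 ≤ t) :
    Var[X i t; ℙ] ≤ 1 / (2 * θ) := by
  rw [hX.variance_eq i ht]
  gcongr
  exact sub_le_self 1 (exp_pos _).le

lemma abs_covariance_le (hθ : 0 < θ) (hX : IsOUPair θ X) (i : Fin 2) (hs : 0 ≤ s) (ht : 0 ≤ t) :
    |cov[X i s, X i t; ℙ]| ≤ exp (-θ * |t - s|) / (2 * θ) := by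
  have habs : |t - s| ≤ t + s := abs_le.mpr ⟨by linarith, by linarith⟩
  have hexp : exp (-θ * (t + s)) ≤ exp (-θ * |t - s|) :=
    exp_le_exp.mpr (mul_le_mul_of_nonpos_left habs (neg_nonpos.mpr hθ.le))
  rw [hX.covariance_eq i hs ht, abs_of_nonneg (div_nonneg (sub_nonneg.mpr hexp) (by positivity))]
  gcongr
  exact sub_le_self _ (exp_pos _).le

lemma sum_abs_covariance_ouGrid_le (hθ : 0 < θ) (hΔ : 0 < Δ) (hX : IsOUPair θ X) (i : Fin 2)
    {n : ℕ} (k : Fin n) :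
    ∑ l, |cov[ouGrid X i n Δ k, ouGrid X i n Δ l; ℙ]| ≤ ouRowBound θ Δ := by
  calc ∑ l, |cov[ouGrid X i n Δ k, ouGrid X i n Δ l; ℙ]|
      ≤ ∑ l : Fin n, exp (-(θ * Δ) * |(l : ℝ) - (k : ℕ)|) / (2 * θ) := by
        refine sum_le_sum fun l _ => (hX.abs_covariance_le hθ i (by positivity)
          (by positivity)).trans_eq ?_
        rw [← sub_mul, abs_mul, abs_of_pos hΔ]
        ring_nf
    _ = (∑ l ∈ range n, exp (-(θ * Δ) * |(l : ℝ) - (k : ℕ)|)) / (2 * θ) := by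
        rw [← sum_div, Finset.sum_range]
    _ ≤ 2 * (1 + 1 / (θ * Δ)) / (2 * θ) := by
        gcongr
        exact sum_range_exp_neg_mul_abs_sub_le (mul_pos hθ hΔ) k.is_lt.le
    _ = ouRowBound θ Δ := mul_div_mul_left _ _ two_ne_zero

lemma isWeaklyCorrelatedGaussian_ouGrid (hθ : 0 < θ) (hΔ : 0 < Δ) (hX : IsOUPair θ X) (i : Fin 2)
    (n : ℕ) : IsWeaklyCorrelatedGaussian (ouGrid X i n Δ) (1 / (2 * θ)) (ouRowBound θ Δ) ℙ where
  hasGaussianLaw := hasGaussianLaw_of_forall_sum_mul (fun k => hX.meas i _) fun c =>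
    ⟨0, hX.gaussian i n _ c fun k => by positivity⟩
  integral_eq_zero k := hX.integral_eq_zero i (by positivity)
  variance_le k := hX.variance_le hθ i (by positivity)
  sum_abs_covariance_le := hX.sum_abs_covariance_ouGrid_le hθ hΔ i

lemma abs_expect_variance_ouGrid_sub_le (hθ : 0 < θ) (hΔ : 0 < Δ) (hX : IsOUPair θ X) (i : Fin 2)
    {n : ℕ} (hn : n ≠ 0) :
    |𝔼 k, Var[ouGrid X i n Δ k; ℙ] - 1 / (2 * θ)| ≤ ouRowBound θ Δ / n := by
  have hsum : ∑ k, Var[ouGrid X i n Δ k; ℙ] =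
      (n - ∑ k ∈ range n, exp (-(2 * θ * Δ) * k)) / (2 * θ) := by
    have hvar (k : Fin n) : Var[ouGrid X i n Δ k; ℙ] =
        (1 - exp (-(2 * θ * Δ) * (k : ℕ))) / (2 * θ) := by
      rw [ouGrid, hX.variance_eq i (by positivity)]
      ring_nf
    simp only [hvar]
    rw [← sum_div, sum_sub_distrib, sum_const, card_univ, Fintype.card_fin, nsmul_one,
      Finset.sum_range]
  have herr : 𝔼 k, Var[ouGrid X i n Δ k; ℙ] - 1 / (2 * θ) =
      -((∑ k ∈ range n, exp (-(2 * θ * Δ) * k)) / (2 * θ) / n) := by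
    rw [Fintype.expect_eq_sum_div_card, Fintype.card_fin, hsum]
    field_simp
    ring
  rw [herr, abs_neg, abs_of_nonneg (by positivity), ouRowBound]
  gcongr ?_ / _
  calc (∑ k ∈ range n, exp (-(2 * θ * Δ) * k)) / (2 * θ)
      ≤ (1 + 1 / (2 * θ * Δ)) / (2 * θ) := by
        gcongr
        exact sum_range_exp_neg_mul_le (by positivity) n
    _ ≤ (1 + 1 / (θ * Δ)) / θ := by
        have : θ ≤ 2 * θ := by linarith
        gcongr

lemma tendsto_expect_variance_ouGrid (hθ : 0 < θ) {Δ : ℕ → ℝ} (hΔ : ∀ᶠ n in atTop, 0 < Δ n)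
    (hlog : (fun n : ℕ => log n) =o[atTop] fun n => n * Δ n) (hX : IsOUPair θ X) (i : Fin 2) :
    Tendsto (fun n => 𝔼 k, Var[ouGrid X i n (Δ n) k; ℙ]) atTop (𝓝 (1 / (2 * θ))) := by
  have log_atTop : Tendsto (fun n : ℕ => log n) atTop atTop :=
    tendsto_log_atTop.comp tendsto_natCast_atTop_atTop
  have hbound : Tendsto (fun n : ℕ => ouRowBound θ (Δ n) / n) atTop (𝓝 0) := by
    refine ((tendsto_ouRowBound_mul_log_div θ hlog).div_atTop log_atTop).congr' ?_
    filter_upwards [log_atTop.eventually_ne_atTop 0] with n hn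
    field_simp
  rw [tendsto_iff_norm_sub_tendsto_zero]
  refine squeeze_zero' (.of_forall fun n => norm_nonneg _) ?_ hbound
  filter_upwards [hΔ, eventually_ne_atTop 0] with n hΔn hn
    using hX.abs_expect_variance_ouGrid_sub_le hθ hΔn i hn

lemma ae_tendsto_expect_ouGrid_sq (hθ : 0 < θ) {Δ : ℕ → ℝ} (hΔ : ∀ᶠ n in atTop, 0 < Δ n)
    (hlog : (fun n : ℕ => log n) =o[atTop] fun n => n * Δ n) (hX : IsOUPair θ X) (i : Fin 2) :
    ∀ᵐ ω ∂(ℙ : Measure Ω),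
      Tendsto (fun n => 𝔼 k, ouGrid X i n (Δ n) k ω ^ 2) atTop (𝓝 (1 / (2 * θ))) := by
  filter_upwards [ae_tendsto_expect_sq_sub_variance
    (hΔ.mono fun n hΔn => hX.isWeaklyCorrelatedGaussian_ouGrid hθ hΔn i n)
    (tendsto_ouRowBound_mul_log_div θ hlog)] with ω hω
  simpa only [expect_sub_distrib, sub_add_cancel, zero_add] using
    hω.add (hX.tendsto_expect_variance_ouGrid hθ hΔ hlog i)

end IsOUPair

end OrnsteinUhlenbeck

section SampleCorrelation

open scoped BigOperators

variable {ι : Type*} [Fintype ι] {Ω' : Type} {x y : ∀ n : ℕ, Fin n → ℝ}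

/-- The empirical covariance of two finite samples, normalised by the sample size. -/
def sampleCovariance (x y : ι → ℝ) : ℝ := 𝔼 k, x k * y k - (𝔼 k, x k) * 𝔼 k, y k

/-- Pearson's empirical correlation coefficient of two finite samples. -/
def sampleCorrelation (x y : ι → ℝ) : ℝ :=
  sampleCovariance x y / √(sampleCovariance x x * sampleCovariance y y)

lemma tendsto_sampleCovariance {σ : ℝ}
    (hx : Tendsto (fun n => 𝔼 k, x n k) atTop (𝓝 0))
    (hy : Tendsto (fun n => 𝔼 k, y n k) atTop (𝓝 0))
    (hxy : Tendsto (fun n => 𝔼 k, x n k * y n k) atTop (𝓝 σ)) :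
    Tendsto (fun n => sampleCovariance (x n) (y n)) atTop (𝓝 σ) := by
  simpa only [sampleCovariance, mul_zero, sub_zero] using hxy.sub (hx.mul hy)

lemma tendsto_sampleCorrelation_zero {v w : ℝ} (hv : 0 < v) (hw : 0 < w)
    (hx : Tendsto (fun n => 𝔼 k, x n k) atTop (𝓝 0))
    (hy : Tendsto (fun n => 𝔼 k, y n k) atTop (𝓝 0))
    (hxx : Tendsto (fun n => 𝔼 k, x n k ^ 2) atTop (𝓝 v))
    (hyy : Tendsto (fun n => 𝔼 k, y n k ^ 2) atTop (𝓝 w))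
    (hxy : Tendsto (fun n => 𝔼 k, x n k * y n k) atTop (𝓝 0)) :
    Tendsto (fun n => sampleCorrelation (x n) (y n)) atTop (𝓝 0) := by
  simp only [sq] at hxx hyy
  have hvar := (tendsto_sampleCovariance hx hx hxx).mul (tendsto_sampleCovariance hy hy hyy)
  have hlim := (tendsto_sampleCovariance hx hy hxy).div hvar.sqrt
    (sqrt_pos.mpr (mul_pos hv hw)).ne'
  rwa [zero_div] at hlim

lemma ouXtilde_eq_expect (X : Fin 2 → ℝ → Ω' → ℝ) (i : Fin 2) (n : ℕ) (Δ : ℝ) (ω : Ω') :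
    ouXtilde X i n Δ ω = 𝔼 k, ouGrid X i n Δ k ω := by
  rw [ouXtilde, Fintype.expect_eq_sum_div_card, Fintype.card_fin, Finset.sum_range,
    one_div_mul_eq_div]
  rfl

lemma ouYtilde_eq_mul_sampleCovariance (X : Fin 2 → ℝ → Ω' → ℝ) (i j : Fin 2) {n : ℕ} (hn : n ≠ 0)
    (Δ : ℝ) (ω : Ω') :
    ouYtilde X i j n Δ ω =
      n * Δ * sampleCovariance (ouGrid X i n Δ · ω) (ouGrid X j n Δ · ω) := by
  rw [ouYtilde, ouXtilde_eq_expect, ouXtilde_eq_expect, sampleCovariance,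
    Fintype.expect_eq_sum_div_card fun k => ouGrid X i n Δ k ω * ouGrid X j n Δ k ω,
    Fintype.card_fin, Finset.sum_range]
  simp only [ouGrid]
  field_simp

lemma ouRhoTilde_eq_sampleCorrelation (X : Fin 2 → ℝ → Ω' → ℝ) {n : ℕ} (hn : n ≠ 0) {Δ : ℝ}
    (hΔ : 0 < Δ) (ω : Ω') :
    ouRhoTilde X n Δ ω = sampleCorrelation (ouGrid X 0 n Δ · ω) (ouGrid X 1 n Δ · ω) := by
  have hT : 0 < n * Δ := by positivity
  rw [ouRhoTilde, sampleCorrelation]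
  simp only [ouYtilde_eq_mul_sampleCovariance X _ _ hn]
  rw [mul_mul_mul_comm, ← sq, sqrt_mul (sq_nonneg _), sqrt_sq hT.le, mul_div_mul_left _ _ hT.ne']

end SampleCorrelation

lemma isLittleO_log_natCast_mul_rpow_neg {l : ℝ} (hl : l < 1) :
    (fun n : ℕ => log n) =o[atTop] fun n : ℕ => n * (n : ℝ) ^ (-l) := by
  refine ((isLittleO_log_rpow_atTop (sub_pos.mpr hl)).comp_tendsto
    tendsto_natCast_atTop_atTop).congr' .rfl ?_
  filter_upwards [eventually_gt_atTop 0] with n hn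
  have hn : (0 : ℝ) < n := by exact_mod_cast hn
  rw [Function.comp_apply, sub_eq_add_neg, rpow_add hn, rpow_one]

theorem stmt_17_general {θ : ℝ} (hθ : 0 < θ) {Δ : ℕ → ℝ} (hΔ : ∀ᶠ n in atTop, 0 < Δ n)
    (hlog : (fun n : ℕ => log n) =o[atTop] fun n => n * Δ n)
    [IsProbabilityMeasure (ℙ : Measure Ω)] {X : Fin 2 → ℝ → Ω → ℝ} (hX : IsOUPair θ X) :
    ∀ᵐ ω ∂(ℙ : Measure Ω), Tendsto (fun n : ℕ => ouRhoTilde X n (Δ n) ω) atTop (𝓝 0) := by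
  have hrate := tendsto_ouRowBound_mul_log_div θ hlog
  have hgrid (i : Fin 2) := hΔ.mono fun n hΔn =>
    hX.isWeaklyCorrelatedGaussian_ouGrid hθ hΔn i n
  have hmean (i : Fin 2) := ae_tendsto_expect (hgrid i) hrate
  have hsq := hX.ae_tendsto_expect_ouGrid_sq hθ hΔ hlog
  have hmul := ae_tendsto_expect_mul_of_indepFun (hgrid 0) hrate (hgrid 1) hrate
    (.of_forall fun n => hX.indepFun_ouGrid n)
  have hvar : 0 < 1 / (2 * θ) := by positivity
  filter_upwards [hmean 0, hmean 1, hsq 0, hsq 1, hmul] with ω hmean₀ hmean₁ hsq₀ hsq₁ hmul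
  refine (tendsto_sampleCorrelation_zero hvar hvar hmean₀ hmean₁ hsq₀ hsq₁ hmul).congr' ?_
  filter_upwards [hΔ, eventually_ne_atTop 0] with n hΔn hn
    using (ouRhoTilde_eq_sampleCorrelation X hn hΔn ω).symm

/-- with mesh `Δₙ = n^{−λ}`, `1/2 < λ < 1`, Yule's discrete nonsense
correlation `ρ̃(n)` converges to `0` almost surely. -/
theorem stmt_17 (θ : ℝ) (hθ : 0 < θ) (l : ℝ) (hl1 : 1 / 2 < l) (hl2 : l < 1)
    [IsProbabilityMeasure (ℙ : Measure Ω)]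
    (X : Fin 2 → ℝ → Ω → ℝ) (hX : IsOUPair θ X) :
    ∀ᵐ ω ∂(ℙ : Measure Ω),
      Tendsto (fun n : ℕ => ouRhoTilde X n ((n : ℝ) ^ (-l)) ω) atTop (𝓝 0) :=
  stmt_17_general hθ ((eventually_gt_atTop 0).mono fun n hn => by positivity)
    (isLittleO_log_natCast_mul_rpow_neg hl2) hX

end
end

section
/- Let (Δₙ)_{n≥1} be a sequence of positive meshes with Δₙ → 0 and nΔₙ → ∞ as n → ∞. For every θ > 0 there exist a constant c(θ) > 0 and n₀ ∈ ℕ such that for all n ≥ n₀, d_Kol( √θ · √Tₙ · ρ̃(n), N(0,1) ) ≤ c(θ) · ln(nΔₙ) · max( (nΔₙ)^{−1/2}, (nΔₙ²)^{1/3} ). In particular, if additionally nΔₙ² → 0 as n → ∞, then √Tₙ · ρ̃(n) converges in distribution to N(0, 1/θ). -/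
open MeasureTheory ProbabilityTheory Real Filter Finset
open scoped Topology ENNReal NNReal

noncomputable section

variable {Ω : Type} [MeasureSpace Ω]

/-!
The discretely sampled paths, normalized by `√(2θ)`, are independent centered Gaussian vectors `W`
and `Z` with a common covariance matrix `K`, and `ρ̃(n)` is their empirical correlation: with `S`
the matrix of the empirical covariance, `ρ̃(n) = W ⬝ S Z / √((W ⬝ S W) (Z ⬝ S Z))`. Conditionally
on `Z`, the numerator `W ⬝ S Z` is exactly a centered Gaussian variable, of variance `Z ⬝ S K S Z`.
The Kolmogorov distance is therefore controlled by the `L¹` distances to `1` of the three quadratic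
forms `W ⬝ S W`, `Z ⬝ S Z` and `Tₙ θ · Z ⬝ S K S Z`. By Isserlis' formula their means and variances
are traces of products of `S` and `K`, which the geometric decay of the entries of `K` away from
the diagonal makes explicit up to errors of order `Tₙ^{-1/2} + Δₙ`. This beats the rate of the
statement, because `Δₙ ≤ (nΔₙ²)^{1/3}` as soon as `Δₙ ≤ n`.
-/

open scoped Matrix

section GaussianReal

lemma integral_pow_four_gaussianReal (v : ℝ≥0) :
    ∫ x, x ^ 4 ∂(gaussianReal 0 v) = 3 * (v : ℝ) ^ 2 := by
  let g : ℝ → ℝ := fun t => rexp (v * t ^ 2 / 2)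
  have hg (t : ℝ) : HasDerivAt g (v * t * g t) t := by
    refine ((((hasDerivAt_pow 2 t).const_mul (v : ℝ)).div_const 2).exp).congr_deriv ?_
    simp only [g]; push_cast; ring
  have deriv_mul_g {p p' : ℝ → ℝ} (hp : ∀ t, HasDerivAt p (p' t) t) :
      deriv (fun t => p t * g t) = fun t => (p' t + p t * (v * t)) * g t := by
    funext t
    rw [((hp t).fun_mul (hg t)).deriv]; ring
  have hd1 : deriv g = fun t => v * t * g t := funext fun t => (hg t).deriv
  have hd2 := deriv_mul_g (p := fun t => v * t) (p' := fun _ => v) fun t => by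
    simpa using (hasDerivAt_id t).const_mul (v : ℝ)
  have hd3 := deriv_mul_g (p := fun t => v + v * t * (v * t)) (p' := fun t => 2 * v ^ 2 * t)
    fun t => (((hasDerivAt_id t).const_mul (v : ℝ)).mul
      ((hasDerivAt_id t).const_mul (v : ℝ)) |>.const_add (v : ℝ)).congr_deriv (by simp; ring)
  have hd4 := deriv_mul_g (p := fun t => 2 * v ^ 2 * t + (v + v * t * (v * t)) * (v * t))
    (p' := fun t => 3 * v ^ 2 + 3 * v ^ 3 * t ^ 2) fun t => by
    have h : HasDerivAt (fun t : ℝ => v ^ 3 * t ^ 3 + 3 * v ^ 2 * t)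
        (3 * v ^ 2 + 3 * v ^ 3 * t ^ 2) t :=
      (((hasDerivAt_pow 3 t).const_mul ((v : ℝ) ^ 3)).fun_add
        ((hasDerivAt_id t).const_mul (3 * (v : ℝ) ^ 2))).congr_deriv (by norm_num; ring)
    exact h.congr_of_eventuallyEq (Eventually.of_forall fun s => by ring)
  have hmgf : mgf (fun x : ℝ => x) (gaussianReal 0 v) = g := by
    rw [mgf_fun_id_gaussianReal]; simp [g]
  have h := iteratedDeriv_mgf_zero (X := fun x : ℝ => x) (μ := gaussianReal 0 v)
    (by simp [integrableExpSet_fun_id_gaussianReal]) 4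
  rw [hmgf, iteratedDeriv_succ', iteratedDeriv_succ', iteratedDeriv_succ', iteratedDeriv_succ',
    iteratedDeriv_zero, hd1, hd2, hd3, hd4] at h
  simpa [g] using h.symm

lemma abs_mul_gaussianPDFReal_le_one (v : ℝ≥0) (x : ℝ) : |x| * gaussianPDFReal 0 v x ≤ 1 := by
  rcases eq_or_ne v 0 with rfl | hv
  · simp [gaussianPDFReal_zero_var]
  have hv' : (0 : ℝ) < v := by positivity
  have hx : |x| ≤ √(2 * π * v) * rexp (x ^ 2 / (2 * v)) := by
    refine abs_le_of_sq_le_sq ?_ (by positivity)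
    have hexp : x ^ 2 / v ≤ rexp (x ^ 2 / v) := by linarith [Real.add_one_le_exp (x ^ 2 / v)]
    have hsq : rexp (x ^ 2 / (2 * v)) ^ 2 = rexp (x ^ 2 / v) := by
      rw [← Real.exp_nat_mul]; congr 1; push_cast; field_simp
    rw [mul_pow, Real.sq_sqrt (by positivity), hsq]
    calc x ^ 2 = v * (x ^ 2 / v) := by field_simp
      _ ≤ v * rexp (x ^ 2 / v) := by gcongr
      _ ≤ 2 * π * v * rexp (x ^ 2 / v) := by
        gcongr; nlinarith [Real.pi_gt_three]
  simp only [gaussianPDFReal, sub_zero, neg_div, Real.exp_neg]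
  rw [← mul_inv, ← div_eq_mul_inv]
  exact div_le_one_of_le₀ hx (by positivity)

lemma gaussianReal_uIoc_mul_le_of_half_le (v : ℝ≥0) (z : ℝ) {r : ℝ} (hr : 1 / 2 ≤ r) :
    (gaussianReal 0 v).real (Set.uIoc z (z * r)) ≤ 2 * |r - 1| := by
  rcases eq_or_ne v 0 with rfl | hv
  · have : (0 : ℝ) ∉ Set.uIoc z (z * r) := by
      rw [Set.mem_uIoc]; rintro (h | h) <;> nlinarith
    simp [gaussianReal_zero_var, measureReal_def, this]
  have hpdf : ∀ x ∈ Set.uIoc z (z * r), ‖gaussianPDFReal 0 v x‖ ≤ 2 / |z| := by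
    intro x hx
    have hzx : |z| / 2 ≤ |x| := by
      rcases Set.mem_uIoc.1 hx with h | h <;> cases abs_cases z <;> cases abs_cases x <;> nlinarith
    have hz : 0 < |z| := abs_pos.2 fun h => by simp [h] at hx
    have hnn := gaussianPDFReal_nonneg 0 v x
    rw [Real.norm_of_nonneg hnn, le_div_iff₀ hz]
    nlinarith [abs_mul_gaussianPDFReal_le_one v x]
  rw [measureReal_def, gaussianReal_apply_eq_integral _ hv,
    ENNReal.toReal_ofReal (integral_nonneg fun x => gaussianPDFReal_nonneg _ _ _)]
  refine (Real.le_norm_self _).trans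
    ((norm_setIntegral_le_of_norm_le_const (by simp [Real.volume_uIoc]) hpdf).trans ?_)
  rw [measureReal_def, Real.volume_uIoc, ENNReal.toReal_ofReal (abs_nonneg _),
    show z * r - z = z * (r - 1) by ring, abs_mul, ← mul_assoc]
  gcongr
  rw [div_mul_eq_mul_div]
  exact div_le_of_le_mul₀ (abs_nonneg z) zero_le_two le_rfl

lemma gaussianReal_uIoc_mul_le (v : ℝ≥0) (z r : ℝ) :
    (gaussianReal 0 v).real (Set.uIoc z (z * r)) ≤ 2 * |r - 1| := by
  rcases le_or_gt (1 / 2) r with hr | hr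
  · exact gaussianReal_uIoc_mul_le_of_half_le v z hr
  · exact measureReal_le_one.trans (by rw [abs_of_neg (by linarith)]; linarith)

lemma abs_measureReal_Iic_sub_le_uIoc (μ : Measure ℝ) [IsFiniteMeasure μ] (a b : ℝ) :
    |μ.real (Set.Iic b) - μ.real (Set.Iic a)| ≤ μ.real (Set.uIoc a b) := by
  refine (abs_measureReal_sub_le_measureReal_symmDiff measurableSet_Iic.nullMeasurableSet
    measurableSet_Iic.nullMeasurableSet).trans (measureReal_mono fun x hx => ?_)
  rw [Set.mem_symmDiff, Set.mem_Iic, Set.mem_Iic, not_le, not_le] at hx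
  exact Set.mem_uIoc.2 (hx.imp And.symm And.symm)

lemma abs_gaussianReal_Iic_sub_stdGaussian_le (v : ℝ≥0) (z : ℝ) :
    |(gaussianReal 0 v).real (Set.Iic z) - (gaussianReal 0 1).real (Set.Iic z)|
      ≤ 2 * |(v : ℝ) - 1| := by
  rcases eq_or_ne v 0 with rfl | hv
  · refine (abs_sub_le_of_le_of_le measureReal_nonneg measureReal_le_one measureReal_nonneg
      measureReal_le_one).trans ?_
    norm_num
  have hs : 0 < √(v : ℝ) := Real.sqrt_pos.2 (by positivity)
  have hscale : (gaussianReal 0 1).real (Set.Iic z)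
      = (gaussianReal 0 v).real (Set.Iic (z * √v)) := by
    have hmap : gaussianReal 0 v = (gaussianReal 0 1).map (fun x => √v * x) := by
      rw [gaussianReal_map_const_mul, mul_zero, mul_one]
      congr; ext; simp
    rw [hmap, map_measureReal_apply (by fun_prop) measurableSet_Iic]
    congr 1
    ext x
    rw [Set.mem_preimage, Set.mem_Iic, Set.mem_Iic, mul_comm, mul_le_mul_iff_left₀ hs]
  have hsqrt : |√(v : ℝ) - 1| ≤ |(v : ℝ) - 1| := by
    rw [show (v : ℝ) - 1 = (√v - 1) * (√v + 1) by linarith [Real.mul_self_sqrt v.coe_nonneg],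
      abs_mul, abs_of_pos (by linarith : 0 < √(v : ℝ) + 1)]
    exact le_mul_of_one_le_right (abs_nonneg _) (by linarith)
  rw [hscale, abs_sub_comm]
  refine (abs_measureReal_Iic_sub_le_uIoc _ _ _).trans
    ((gaussianReal_uIoc_mul_le v z _).trans ?_)
  gcongr

end GaussianReal

section GaussianVector

lemma dotProduct_mulVec_comm_of_isSymm {ι : Type*} [Fintype ι] {A : Matrix ι ι ℝ}
    (hA : A.IsSymm) (v w : ι → ℝ) : v ⬝ᵥ A *ᵥ w = w ⬝ᵥ A *ᵥ v := by
  rw [Matrix.dotProduct_mulVec, ← Matrix.mulVec_transpose, hA.eq, dotProduct_comm]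

variable {ι Ξ : Type*} [MeasurableSpace Ξ] {P : Measure Ξ}

/-- `Z` is a centered Gaussian vector with covariance matrix `K` under `P`. -/
structure IsCenteredGaussian (K : Matrix ι ι ℝ) (Z : Ξ → ι → ℝ) (P : Measure Ξ) : Prop where
  measurable : Measurable Z
  hasGaussianLaw : HasGaussianLaw Z P
  integral_eval_eq_zero : ∀ i, ∫ ω, Z ω i ∂P = 0
  integral_eval_mul_eval : ∀ i j, ∫ ω, Z ω i * Z ω j ∂P = K i j

namespace IsCenteredGaussian

variable {K : Matrix ι ι ℝ} {Z : Ξ → ι → ℝ}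

lemma isProbabilityMeasure (h : IsCenteredGaussian K Z P) : IsProbabilityMeasure P :=
  h.hasGaussianLaw.isProbabilityMeasure

lemma isSymm (h : IsCenteredGaussian K Z P) : K.IsSymm :=
  Matrix.IsSymm.ext fun i j => by
    simp_rw [← h.integral_eval_mul_eval, mul_comm]

section Fintype

variable [Fintype ι]

lemma of_forall_map_dotProduct (hZ : Measurable Z)
    (hlaw : ∀ c, ∃ v : ℝ≥0, P.map (fun ω => c ⬝ᵥ Z ω) = gaussianReal 0 v)
    (hcov : ∀ i j, ∫ ω, Z ω i * Z ω j ∂P = K i j) : IsCenteredGaussian K Z P where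
  measurable := hZ
  hasGaussianLaw := ⟨isGaussian_of_map_eq_gaussianReal fun L => by
    classical
    obtain ⟨v, hv⟩ := hlaw fun i => L (Pi.single i 1)
    refine ⟨0, v, ?_⟩
    rw [← hv, Measure.map_map L.continuous.measurable hZ]
    congr 1 with ω
    nth_rw 1 [Function.comp_apply, ← Finset.univ_sum_single (Z ω)]
    simp only [map_sum, dotProduct]
    refine Finset.sum_congr rfl fun i _ => ?_
    rw [mul_comm, ← smul_eq_mul, ← map_smul, ← Pi.single_smul, smul_eq_mul, mul_one]⟩
  integral_eval_eq_zero i := by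
    classical
    obtain ⟨v, hv⟩ := hlaw (Pi.single i 1)
    simp only [single_dotProduct, one_mul] at hv
    rw [← integral_map (f := fun x : ℝ => x) (measurable_pi_iff.1 hZ i).aemeasurable
      (by fun_prop), hv, integral_id_gaussianReal]
  integral_eval_mul_eval := hcov

lemma measurable_dotProduct (h : IsCenteredGaussian K Z P) (c : ι → ℝ) :
    Measurable fun ω => c ⬝ᵥ Z ω := by
  have := h.measurable
  simp only [dotProduct]
  fun_prop

lemma hasGaussianLaw_dotProduct (h : IsCenteredGaussian K Z P) (c : ι → ℝ) :
    HasGaussianLaw (fun ω => c ⬝ᵥ Z ω) P :=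
  h.hasGaussianLaw.map_fun (∑ i, c i • ContinuousLinearMap.proj (R := ℝ) (φ := fun _ : ι => ℝ) i)
    |>.congr <| Eventually.of_forall fun ω => by simp [dotProduct]

lemma memLp_dotProduct (h : IsCenteredGaussian K Z P) (c : ι → ℝ) {p : ℝ≥0∞} (hp : p ≠ ∞) :
    MemLp (fun ω => c ⬝ᵥ Z ω) p P :=
  (h.hasGaussianLaw_dotProduct c).memLp hp

lemma memLp_dotProduct_mul_dotProduct (h : IsCenteredGaussian K Z P) (c d : ι → ℝ) :
    MemLp (fun ω => (c ⬝ᵥ Z ω) * (d ⬝ᵥ Z ω)) 2 P := by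
  have : ENNReal.HolderTriple 4 4 2 := ⟨by
    rw [← two_mul, show (4 : ℝ≥0∞) = 2 * 2 by norm_num, ENNReal.mul_inv (by simp) (by simp),
      ← mul_assoc, ENNReal.mul_inv_cancel (by simp) (by simp), one_mul]⟩
  exact (h.memLp_dotProduct d (p := 4) (by simp)).mul (h.memLp_dotProduct c (p := 4) (by simp))

lemma integral_dotProduct (h : IsCenteredGaussian K Z P) (c : ι → ℝ) :
    ∫ ω, c ⬝ᵥ Z ω ∂P = 0 := by
  have := h.hasGaussianLaw.isProbabilityMeasure
  simp only [dotProduct]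
  rw [integral_finsetSum _ fun i _ => ((h.hasGaussianLaw.eval i).integrable).const_mul _]
  simp [integral_const_mul, h.integral_eval_eq_zero]

lemma integral_dotProduct_mul_dotProduct (h : IsCenteredGaussian K Z P) (c d : ι → ℝ) :
    ∫ ω, (c ⬝ᵥ Z ω) * (d ⬝ᵥ Z ω) ∂P = c ⬝ᵥ K *ᵥ d := by
  have hint (i j : ι) : Integrable (fun ω => c i * Z ω i * (d j * Z ω j)) P :=
    ((h.hasGaussianLaw.eval i).memLp_two.const_mul _).integrable_mul
      ((h.hasGaussianLaw.eval j).memLp_two.const_mul _)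
  simp only [dotProduct, Matrix.mulVec]
  simp_rw [Finset.sum_mul_sum, Finset.mul_sum]
  rw [integral_finsetSum _ fun i _ => integrable_finsetSum _ fun j _ => hint i j]
  refine Finset.sum_congr rfl fun i _ => ?_
  rw [integral_finsetSum _ fun j _ => hint i j]
  refine Finset.sum_congr rfl fun j _ => ?_
  rw [← h.integral_eval_mul_eval, ← mul_assoc, mul_right_comm, ← integral_const_mul]
  exact integral_congr_ae (Eventually.of_forall fun ω => by ring)

lemma dotProduct_mulVec_self_nonneg (h : IsCenteredGaussian K Z P) (c : ι → ℝ) :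
    0 ≤ c ⬝ᵥ K *ᵥ c := by
  rw [← h.integral_dotProduct_mul_dotProduct]
  exact integral_nonneg fun ω => mul_self_nonneg _

lemma map_dotProduct (h : IsCenteredGaussian K Z P) (c : ι → ℝ) :
    P.map (fun ω => c ⬝ᵥ Z ω) = gaussianReal 0 (c ⬝ᵥ K *ᵥ c).toNNReal := by
  rw [(h.hasGaussianLaw_dotProduct c).map_eq_gaussianReal, h.integral_dotProduct,
    variance_of_integral_eq_zero (h.measurable_dotProduct c).aemeasurable (h.integral_dotProduct c),
    ← h.integral_dotProduct_mul_dotProduct]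
  simp only [sq]

lemma integral_dotProduct_pow_four (h : IsCenteredGaussian K Z P) (c : ι → ℝ) :
    ∫ ω, (c ⬝ᵥ Z ω) ^ 4 ∂P = 3 * (c ⬝ᵥ K *ᵥ c) ^ 2 := by
  have hmom := integral_pow_four_gaussianReal (c ⬝ᵥ K *ᵥ c).toNNReal
  rwa [← h.map_dotProduct, integral_map (h.measurable_dotProduct c).aemeasurable (by fun_prop),
    Real.coe_toNNReal _ (h.dotProduct_mulVec_self_nonneg c)] at hmom

lemma integrable_mul_mul_mul (h : IsCenteredGaussian K Z P) (a b c d : ι → ℝ) :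
    Integrable (fun ω => (a ⬝ᵥ Z ω) * (b ⬝ᵥ Z ω) * ((c ⬝ᵥ Z ω) * (d ⬝ᵥ Z ω))) P :=
  (h.memLp_dotProduct_mul_dotProduct a b).integrable_mul (h.memLp_dotProduct_mul_dotProduct c d)

lemma integral_sq_mul_sq (h : IsCenteredGaussian K Z P) (c d : ι → ℝ) :
    ∫ ω, (c ⬝ᵥ Z ω) * (c ⬝ᵥ Z ω) * ((d ⬝ᵥ Z ω) * (d ⬝ᵥ Z ω)) ∂P
      = (c ⬝ᵥ K *ᵥ c) * (d ⬝ᵥ K *ᵥ d) + 2 * (c ⬝ᵥ K *ᵥ d) ^ 2 := by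
  have hpol : ∀ ω, (c ⬝ᵥ Z ω) * (c ⬝ᵥ Z ω) * ((d ⬝ᵥ Z ω) * (d ⬝ᵥ Z ω)) =
      (1 / 12) * (((c + d) ⬝ᵥ Z ω) ^ 4 + ((c - d) ⬝ᵥ Z ω) ^ 4
        - 2 * ((c ⬝ᵥ Z ω) ^ 4 + (d ⬝ᵥ Z ω) ^ 4)) := fun ω => by
    rw [add_dotProduct, sub_dotProduct]; ring
  have hint (e : ι → ℝ) : Integrable (fun ω => (e ⬝ᵥ Z ω) ^ 4) P := by
    simpa only [pow_succ, pow_zero, one_mul, mul_assoc] using h.integrable_mul_mul_mul e e e e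
  simp only [hpol]
  rw [integral_const_mul,
    integral_sub ((hint _).fun_add (hint _)) (((hint _).fun_add (hint _)).const_mul _),
    integral_add (hint _) (hint _), integral_const_mul, integral_add (hint _) (hint _)]
  simp only [h.integral_dotProduct_pow_four]
  simp only [add_dotProduct, sub_dotProduct, Matrix.mulVec_add, Matrix.mulVec_sub,
    dotProduct_add, dotProduct_sub, dotProduct_mulVec_comm_of_isSymm h.isSymm d c]
  ring

lemma integral_sq_mul_mul (h : IsCenteredGaussian K Z P) (c d e : ι → ℝ) :
    ∫ ω, (c ⬝ᵥ Z ω) * (c ⬝ᵥ Z ω) * ((d ⬝ᵥ Z ω) * (e ⬝ᵥ Z ω)) ∂P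
      = (c ⬝ᵥ K *ᵥ c) * (d ⬝ᵥ K *ᵥ e) + 2 * (c ⬝ᵥ K *ᵥ d) * (c ⬝ᵥ K *ᵥ e) := by
  have hpol : ∀ ω, (c ⬝ᵥ Z ω) * (c ⬝ᵥ Z ω) * ((d ⬝ᵥ Z ω) * (e ⬝ᵥ Z ω)) =
      (1 / 4) * ((c ⬝ᵥ Z ω) * (c ⬝ᵥ Z ω) * (((d + e) ⬝ᵥ Z ω) * ((d + e) ⬝ᵥ Z ω))
        - (c ⬝ᵥ Z ω) * (c ⬝ᵥ Z ω) * (((d - e) ⬝ᵥ Z ω) * ((d - e) ⬝ᵥ Z ω))) := fun ω => by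
    rw [add_dotProduct, sub_dotProduct]; ring
  simp only [hpol]
  rw [integral_const_mul,
    integral_sub (h.integrable_mul_mul_mul _ _ _ _) (h.integrable_mul_mul_mul _ _ _ _)]
  simp only [h.integral_sq_mul_sq]
  simp only [add_dotProduct, sub_dotProduct, Matrix.mulVec_add, Matrix.mulVec_sub,
    dotProduct_add, dotProduct_sub, dotProduct_mulVec_comm_of_isSymm h.isSymm e d]
  ring

lemma integral_mul_mul_mul (h : IsCenteredGaussian K Z P) (a b c d : ι → ℝ) :
    ∫ ω, (a ⬝ᵥ Z ω) * (b ⬝ᵥ Z ω) * ((c ⬝ᵥ Z ω) * (d ⬝ᵥ Z ω)) ∂P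
      = (a ⬝ᵥ K *ᵥ b) * (c ⬝ᵥ K *ᵥ d) + (a ⬝ᵥ K *ᵥ c) * (b ⬝ᵥ K *ᵥ d)
        + (a ⬝ᵥ K *ᵥ d) * (b ⬝ᵥ K *ᵥ c) := by
  have hpol : ∀ ω, (a ⬝ᵥ Z ω) * (b ⬝ᵥ Z ω) * ((c ⬝ᵥ Z ω) * (d ⬝ᵥ Z ω)) =
      (1 / 4) * (((a + b) ⬝ᵥ Z ω) * ((a + b) ⬝ᵥ Z ω) * ((c ⬝ᵥ Z ω) * (d ⬝ᵥ Z ω))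
        - ((a - b) ⬝ᵥ Z ω) * ((a - b) ⬝ᵥ Z ω) * ((c ⬝ᵥ Z ω) * (d ⬝ᵥ Z ω))) := fun ω => by
    rw [add_dotProduct, sub_dotProduct]; ring
  simp only [hpol]
  rw [integral_const_mul,
    integral_sub (h.integrable_mul_mul_mul _ _ _ _) (h.integrable_mul_mul_mul _ _ _ _)]
  simp only [h.integral_sq_mul_mul]
  simp only [add_dotProduct, sub_dotProduct, Matrix.mulVec_add, Matrix.mulVec_sub,
    dotProduct_add, dotProduct_sub, dotProduct_mulVec_comm_of_isSymm h.isSymm b a]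
  ring

end Fintype

variable [Finite ι]

lemma memLp_eval_mul_eval (h : IsCenteredGaussian K Z P) (i j : ι) :
    MemLp (fun ω => Z ω i * Z ω j) 2 P := by
  classical
  have := Fintype.ofFinite ι
  simpa using h.memLp_dotProduct_mul_dotProduct (Pi.single i 1) (Pi.single j 1)

lemma covariance_eval_mul_eval (h : IsCenteredGaussian K Z P) (i j k l : ι) :
    cov[fun ω => Z ω i * Z ω j, fun ω => Z ω k * Z ω l; P] = K i k * K j l + K i l * K j k := by
  classical
  have := Fintype.ofFinite ι
  have := h.isProbabilityMeasure
  have hmul := h.integral_mul_mul_mul (Pi.single i 1) (Pi.single j 1) (Pi.single k 1)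
    (Pi.single l 1)
  simp only [single_one_dotProduct, Matrix.mulVec_single_one, Matrix.col_apply] at hmul
  rw [covariance_eq_sub (h.memLp_eval_mul_eval i j) (h.memLp_eval_mul_eval k l)]
  simp only [Pi.mul_apply, hmul, h.integral_eval_mul_eval]
  ring

end IsCenteredGaussian

end GaussianVector

section MatrixEntries

open scoped Matrix.Norms.Operator

variable {ι : Type*} [Fintype ι]

lemma sum_abs_row_le_norm (M : Matrix ι ι ℝ) (i : ι) : ∑ j, |M i j| ≤ ‖M‖ := by
  have h : ∑ j, ‖M i j‖₊ ≤ ‖M‖₊ := by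
    rw [Matrix.linfty_opNNNorm_def]
    exact Finset.le_sup (f := fun i => ∑ j, ‖M i j‖₊) (Finset.mem_univ i)
  simpa only [Real.norm_eq_abs, coe_nnnorm, NNReal.coe_sum] using NNReal.coe_le_coe.2 h

lemma linfty_opNorm_le_of_forall_sum_abs_le {M : Matrix ι ι ℝ} {r : ℝ} (hr : 0 ≤ r)
    (h : ∀ i, ∑ j, |M i j| ≤ r) : ‖M‖ ≤ r := by
  lift r to ℝ≥0 using hr
  rw [Matrix.linfty_opNorm_def, NNReal.coe_le_coe]
  exact Finset.sup_le fun i _ => by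
    simpa only [← NNReal.coe_le_coe, NNReal.coe_sum, coe_nnnorm, Real.norm_eq_abs] using h i

lemma sum_sum_abs_le_card_mul_norm (M : Matrix ι ι ℝ) :
    ∑ i, ∑ j, |M i j| ≤ Fintype.card ι * ‖M‖ := by
  simpa using Finset.sum_le_card_nsmul univ _ _ fun i _ => sum_abs_row_le_norm M i

lemma abs_trace_mul_le_card_mul_norm (M : Matrix ι ι ℝ) {K : Matrix ι ι ℝ}
    (hK : ∀ i j, |K i j| ≤ 1) : |(M * K).trace| ≤ Fintype.card ι * ‖M‖ := by
  refine le_trans ?_ (sum_sum_abs_le_card_mul_norm M)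
  simp only [Matrix.trace, Matrix.diag_apply, Matrix.mul_apply]
  refine (Finset.abs_sum_le_sum_abs _ _).trans (Finset.sum_le_sum fun i _ =>
    (Finset.abs_sum_le_sum_abs _ _).trans (Finset.sum_le_sum fun j _ => ?_))
  rw [abs_mul]
  exact mul_le_of_le_one_right (abs_nonneg _) (hK j i)

lemma abs_one_dotProduct_mulVec_one_le (M : Matrix ι ι ℝ) :
    |1 ⬝ᵥ M *ᵥ 1| ≤ Fintype.card ι * ‖M‖ := by
  refine le_trans ?_ (sum_sum_abs_le_card_mul_norm M)
  simp only [one_dotProduct, Matrix.mulVec, dotProduct_one]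
  exact (Finset.abs_sum_le_sum_abs _ _).trans
    (Finset.sum_le_sum fun i _ => Finset.abs_sum_le_sum_abs _ _)

lemma trace_vecMulVec_one_one_mul (M : Matrix ι ι ℝ) :
    (Matrix.vecMulVec 1 1 * M).trace = 1 ⬝ᵥ M *ᵥ 1 := by
  rw [Matrix.vecMulVec_mul, Matrix.trace_vecMulVec, Matrix.dotProduct_mulVec, dotProduct_comm]

end MatrixEntries

section QuadraticForm

variable {ι Ξ : Type*} [Fintype ι] [MeasurableSpace Ξ] {P : Measure Ξ}

lemma integral_abs_sub_le_sqrt_variance_add [IsProbabilityMeasure P] {f : Ξ → ℝ}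
    (hf : MemLp f 2 P) (a : ℝ) :
    ∫ ω, |f ω - a| ∂P ≤ √Var[f; P] + |P[f] - a| := by
  have hcent : MemLp (fun ω => f ω - P[f]) 2 P := hf.sub (memLp_const _)
  have hint : Integrable (fun ω => |f ω - P[f]|) P := (hcent.integrable one_le_two).abs
  have hcauchy : ∫ ω, |f ω - P[f]| ∂P ≤ √Var[f; P] := by
    refine Real.le_sqrt_of_sq_le ?_
    have h := variance_nonneg (fun ω => |f ω - P[f]|) P
    rw [variance_eq_sub (by exact hcent.abs)] at h
    rw [variance_eq_integral hf.aemeasurable]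
    simpa only [Pi.pow_apply, sq_abs, sub_nonneg] using h
  calc ∫ ω, |f ω - a| ∂P ≤ ∫ ω, (|f ω - P[f]| + |P[f] - a|) ∂P :=
        integral_mono ((hf.sub (memLp_const a)).integrable one_le_two).abs
          (hint.add (integrable_const _)) fun ω => abs_sub_le _ _ _
    _ = ∫ ω, |f ω - P[f]| ∂P + |P[f] - a| := by
        rw [integral_add hint (integrable_const _)]; simp
    _ ≤ √Var[f; P] + |P[f] - a| := by gcongr

lemma dotProduct_mulVec_self_eq_sum (A : Matrix ι ι ℝ) (z : ι → ℝ) :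
    z ⬝ᵥ A *ᵥ z = ∑ p : ι × ι, A p.1 p.2 * (z p.1 * z p.2) := by
  rw [Matrix.dot_mulVec_eq_sum_sum, Fintype.sum_prod_type_right]
  simp only [mul_assoc, mul_left_comm]

lemma trace_mul_mul_mul_eq_sum (A K : Matrix ι ι ℝ) :
    (A * K * A * K).trace
      = ∑ p : ι × ι, ∑ q : ι × ι, A p.1 p.2 * A q.1 q.2 * (K p.2 q.1 * K q.2 p.1) := by
  simp only [Matrix.mul_assoc A K]
  simp only [Matrix.mul_assoc, Matrix.trace, Matrix.diag_apply, Matrix.mul_apply,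
    Fintype.sum_prod_type, Finset.mul_sum]
  exact Finset.sum_congr rfl fun i _ => Finset.sum_congr rfl fun j _ => Finset.sum_congr rfl
    fun k _ => Finset.sum_congr rfl fun l _ => by ring

namespace IsCenteredGaussian

variable {K : Matrix ι ι ℝ} {Z : Ξ → ι → ℝ}

lemma memLp_quadForm (h : IsCenteredGaussian K Z P) (A : Matrix ι ι ℝ) :
    MemLp (fun ω => Z ω ⬝ᵥ A *ᵥ Z ω) 2 P := by
  classical
  simp only [dotProduct_mulVec_self_eq_sum]
  exact memLp_finsetSum _ fun p _ => (h.memLp_eval_mul_eval p.1 p.2).const_mul _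

lemma integral_quadForm (h : IsCenteredGaussian K Z P) (A : Matrix ι ι ℝ) :
    ∫ ω, Z ω ⬝ᵥ A *ᵥ Z ω ∂P = (A * K).trace := by
  classical
  have := h.isProbabilityMeasure
  simp only [dotProduct_mulVec_self_eq_sum]
  rw [integral_finsetSum _ fun p _ =>
    ((h.memLp_eval_mul_eval p.1 p.2).integrable one_le_two).const_mul _]
  simp only [integral_const_mul, h.integral_eval_mul_eval, Matrix.trace, Matrix.diag_apply,
    Matrix.mul_apply, Fintype.sum_prod_type]
  simp only [h.isSymm.apply]

lemma variance_quadForm (h : IsCenteredGaussian K Z P) {A : Matrix ι ι ℝ} (hA : A.IsSymm) :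
    Var[fun ω => Z ω ⬝ᵥ A *ᵥ Z ω; P] = 2 * (A * K * A * K).trace := by
  classical
  have := h.isProbabilityMeasure
  have hLp (p : ι × ι) := (h.memLp_eval_mul_eval p.1 p.2).const_mul (A p.1 p.2)
  rw [← covariance_self (h.memLp_quadForm A).aemeasurable, two_mul]
  simp only [dotProduct_mulVec_self_eq_sum]
  rw [covariance_fun_sum_fun_sum hLp hLp, trace_mul_mul_mul_eq_sum, ← Finset.sum_add_distrib]
  refine Finset.sum_congr rfl fun p _ => ?_
  have hswap : ∑ q : ι × ι, A p.1 p.2 * A q.1 q.2 * (K p.2 q.1 * K q.2 p.1)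
      = ∑ q : ι × ι, A p.1 p.2 * A q.1 q.2 * (K p.2 q.2 * K q.1 p.1) := by
    rw [← (Equiv.prodComm ι ι).sum_comp]
    simp only [Equiv.prodComm_apply, Prod.fst_swap, Prod.snd_swap, hA.apply]
  nth_rewrite 1 [hswap]
  rw [← Finset.sum_add_distrib]
  refine Finset.sum_congr rfl fun q _ => ?_
  rw [covariance_const_mul_left, covariance_const_mul_right, h.covariance_eval_mul_eval,
    h.isSymm.apply p.1 q.1, h.isSymm.apply p.1 q.2]
  ring

open scoped Matrix.Norms.Operator in
lemma integral_abs_quadForm_sub_one_le (h : IsCenteredGaussian K Z P)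
    (hK : ∀ i j, |K i j| ≤ 1) {A : Matrix ι ι ℝ} (hA : A.IsSymm) :
    ∫ ω, |Z ω ⬝ᵥ A *ᵥ Z ω - 1| ∂P
      ≤ √(2 * Fintype.card ι * (‖A‖ ^ 2 * ‖K‖)) + |(A * K).trace - 1| := by
  have := h.isProbabilityMeasure
  refine (integral_abs_sub_le_sqrt_variance_add (h.memLp_quadForm A) 1).trans ?_
  rw [h.variance_quadForm hA, h.integral_quadForm]
  gcongr ?_ + _
  refine Real.sqrt_le_sqrt ?_
  rw [mul_assoc (2 : ℝ)]
  gcongr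
  refine (le_abs_self _).trans ((abs_trace_mul_le_card_mul_norm _ hK).trans ?_)
  gcongr
  calc ‖A * K * A‖ ≤ ‖A‖ * ‖K‖ * ‖A‖ := by
        refine (Matrix.linfty_opNorm_mul _ _).trans ?_
        gcongr
        exact Matrix.linfty_opNorm_mul _ _
    _ = ‖A‖ ^ 2 * ‖K‖ := by ring

end IsCenteredGaussian

end QuadraticForm

section SampleCovariance

open scoped Matrix.Norms.Operator

variable (ι : Type*) [Fintype ι] [DecidableEq ι]

/-- The matrix of the empirical covariance: for samples `w` and `z` of size `n`, the bilinear form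
`w ⬝ᵥ sampleCovMatrix ι *ᵥ z` is `n⁻¹ ∑ wᵢ zᵢ - (n⁻¹ ∑ wᵢ) (n⁻¹ ∑ zᵢ)`. -/
def sampleCovMatrix : Matrix ι ι ℝ :=
  (Fintype.card ι : ℝ)⁻¹ • (1 - (Fintype.card ι : ℝ)⁻¹ • Matrix.vecMulVec 1 1)

lemma isSymm_sampleCovMatrix : (sampleCovMatrix ι).IsSymm := by
  simp only [Matrix.IsSymm, sampleCovMatrix, Matrix.transpose_smul, Matrix.transpose_sub,
    Matrix.transpose_one, Matrix.transpose_vecMulVec]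

lemma norm_sampleCovMatrix_le : ‖sampleCovMatrix ι‖ ≤ 2 / Fintype.card ι := by
  set n := (Fintype.card ι : ℝ) with hn
  have hentry (i j : ι) : |sampleCovMatrix ι i j| ≤ n⁻¹ * ((1 : Matrix ι ι ℝ) i j + n⁻¹) := by
    rw [sampleCovMatrix, Matrix.smul_apply, Matrix.sub_apply, Matrix.smul_apply, smul_eq_mul,
      smul_eq_mul, Matrix.vecMulVec_apply, abs_mul, abs_of_nonneg (by positivity)]
    gcongr
    refine (abs_sub _ _).trans_eq ?_
    rw [Matrix.one_apply]
    split_ifs <;> simp [hn]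
  refine linfty_opNorm_le_of_forall_sum_abs_le (by positivity) fun i => ?_
  calc ∑ j, |sampleCovMatrix ι i j| ≤ ∑ j, n⁻¹ * ((1 : Matrix ι ι ℝ) i j + n⁻¹) :=
        Finset.sum_le_sum fun j _ => hentry i j
    _ = n⁻¹ * (1 + n * n⁻¹) := by
        rw [← Finset.mul_sum, Finset.sum_add_distrib]
        simp [Matrix.one_apply, hn]
    _ ≤ n⁻¹ * (1 + 1) := by gcongr; exact mul_inv_le_one
    _ = 2 / n := by ring

variable {ι}

lemma dotProduct_sampleCovMatrix_mulVec (w z : ι → ℝ) :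
    w ⬝ᵥ sampleCovMatrix ι *ᵥ z = (Fintype.card ι : ℝ)⁻¹ * ∑ i, w i * z i
      - ((Fintype.card ι : ℝ)⁻¹ * ∑ i, w i) * ((Fintype.card ι : ℝ)⁻¹ * ∑ i, z i) := by
  simp only [sampleCovMatrix, Matrix.smul_mulVec, Matrix.sub_mulVec, Matrix.one_mulVec,
    dotProduct_smul, dotProduct_sub, Matrix.vecMulVec_mulVec, dotProduct_one, one_dotProduct,
    smul_eq_mul, op_smul_eq_smul]
  rw [dotProduct]
  ring

lemma trace_sampleCovMatrix_mul (K : Matrix ι ι ℝ) :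
    (sampleCovMatrix ι * K).trace = (Fintype.card ι : ℝ)⁻¹ * K.trace
      - (Fintype.card ι : ℝ)⁻¹ ^ 2 * (1 ⬝ᵥ K *ᵥ 1) := by
  simp only [sampleCovMatrix, Matrix.smul_mul, Matrix.sub_mul, Matrix.one_mul,
    Matrix.trace_smul, Matrix.trace_sub, trace_vecMulVec_one_one_mul, smul_eq_mul]
  ring

lemma trace_sampleCovMatrix_mul_mul_mul (K : Matrix ι ι ℝ) :
    (sampleCovMatrix ι * K * sampleCovMatrix ι * K).trace = (Fintype.card ι : ℝ)⁻¹ ^ 2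
      * ((K * K).trace - 2 * (Fintype.card ι : ℝ)⁻¹ * (1 ⬝ᵥ (K * K) *ᵥ 1)
        + (Fintype.card ι : ℝ)⁻¹ ^ 2 * (1 ⬝ᵥ K *ᵥ 1) ^ 2) := by
  set J : Matrix ι ι ℝ := Matrix.vecMulVec 1 1 with hJ
  have hJmul (M : Matrix ι ι ℝ) : (J * M).trace = 1 ⬝ᵥ M *ᵥ 1 := trace_vecMulVec_one_one_mul M
  have hKJK : (K * (J * K)).trace = 1 ⬝ᵥ (K * K) *ᵥ 1 := by
    rw [Matrix.trace_mul_comm, Matrix.mul_assoc, hJmul]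
  have hJKJK : (J * K * (J * K)).trace = (1 ⬝ᵥ K *ᵥ 1) ^ 2 := by
    rw [Matrix.mul_assoc, hJmul, ← Matrix.mulVec_mulVec, ← Matrix.mulVec_mulVec, hJ,
      Matrix.vecMulVec_mulVec, Matrix.mulVec_smul, dotProduct_smul]
    simp [sq]
  have hJKK : (J * K * K).trace = 1 ⬝ᵥ (K * K) *ᵥ 1 := by rw [Matrix.mul_assoc, hJmul]
  rw [Matrix.mul_assoc, sampleCovMatrix, ← hJ]
  simp only [Matrix.smul_mul, Matrix.mul_smul, Matrix.sub_mul, Matrix.mul_sub, Matrix.one_mul,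
    Matrix.trace_smul, Matrix.trace_sub, smul_eq_mul, hKJK, hJKJK, hJKK]
  ring

lemma abs_trace_sampleCovMatrix_mul_sub_le [Nonempty ι] (K : Matrix ι ι ℝ) (a : ℝ) :
    |(sampleCovMatrix ι * K).trace - a|
      ≤ |K.trace / Fintype.card ι - a| + ‖K‖ / Fintype.card ι := by
  have : (0 : ℝ) < Fintype.card ι := by exact_mod_cast Fintype.card_pos
  rw [trace_sampleCovMatrix_mul, inv_mul_eq_div, sub_right_comm]
  refine (abs_sub _ _).trans ?_
  gcongr
  rw [abs_mul, abs_of_pos (by positivity)]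
  calc (Fintype.card ι : ℝ)⁻¹ ^ 2 * |1 ⬝ᵥ K *ᵥ 1|
      ≤ (Fintype.card ι : ℝ)⁻¹ ^ 2 * (Fintype.card ι * ‖K‖) := by
        gcongr; exact abs_one_dotProduct_mulVec_one_le K
    _ = ‖K‖ / Fintype.card ι := by field_simp

lemma abs_trace_sampleCovMatrix_mul_mul_mul_sub_le [Nonempty ι] (K : Matrix ι ι ℝ) :
    |(sampleCovMatrix ι * K * sampleCovMatrix ι * K).trace
        - (K * K).trace / (Fintype.card ι : ℝ) ^ 2| ≤ 3 * ‖K‖ ^ 2 / (Fintype.card ι : ℝ) ^ 2 := by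
  rw [trace_sampleCovMatrix_mul_mul_mul]
  set n := (Fintype.card ι : ℝ) with hn
  have hnpos : 0 < n := by rw [hn]; exact_mod_cast Fintype.card_pos
  have hKK : |1 ⬝ᵥ (K * K) *ᵥ 1| ≤ n * ‖K‖ ^ 2 := by
    refine (abs_one_dotProduct_mulVec_one_le _).trans ?_
    rw [sq]
    gcongr
    exact Matrix.linfty_opNorm_mul _ _
  have hK : (1 ⬝ᵥ K *ᵥ 1) ^ 2 ≤ (n * ‖K‖) ^ 2 := sq_le_sq' (abs_le.1
    (abs_one_dotProduct_mulVec_one_le K)).1 (abs_le.1 (abs_one_dotProduct_mulVec_one_le K)).2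
  rw [show n⁻¹ ^ 2 * ((K * K).trace - 2 * n⁻¹ * (1 ⬝ᵥ (K * K) *ᵥ 1) + n⁻¹ ^ 2 * (1 ⬝ᵥ K *ᵥ 1) ^ 2)
      - (K * K).trace / n ^ 2
      = ((1 ⬝ᵥ K *ᵥ 1) ^ 2 / n ^ 2 - 2 * ((1 ⬝ᵥ (K * K) *ᵥ 1) / n)) / n ^ 2 by field_simp; ring,
    abs_div, abs_of_pos (pow_pos hnpos 2)]
  gcongr
  calc |(1 ⬝ᵥ K *ᵥ 1) ^ 2 / n ^ 2 - 2 * ((1 ⬝ᵥ (K * K) *ᵥ 1) / n)|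
      ≤ (1 ⬝ᵥ K *ᵥ 1) ^ 2 / n ^ 2 + 2 * (|1 ⬝ᵥ (K * K) *ᵥ 1| / n) := by
        refine (abs_sub _ _).trans_eq ?_
        rw [abs_mul, abs_div _ n, abs_of_pos hnpos, abs_of_nonneg (by positivity), abs_two]
    _ ≤ (n * ‖K‖) ^ 2 / n ^ 2 + 2 * (n * ‖K‖ ^ 2 / n) := by gcongr
    _ = 3 * ‖K‖ ^ 2 := by field_simp; ring

namespace IsCenteredGaussian

variable {Ξ : Type*} [MeasurableSpace Ξ] {P : Measure Ξ} [Nonempty ι] {K : Matrix ι ι ℝ}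
  {Z : Ξ → ι → ℝ}

lemma integral_abs_sampleVariance_sub_one_le (h : IsCenteredGaussian K Z P)
    (hK : ∀ i j, |K i j| ≤ 1) :
    ∫ ω, |Z ω ⬝ᵥ sampleCovMatrix ι *ᵥ Z ω - 1| ∂P
      ≤ √(8 * ‖K‖ / Fintype.card ι) + |K.trace / Fintype.card ι - 1| + ‖K‖ / Fintype.card ι := by
  refine (h.integral_abs_quadForm_sub_one_le hK (isSymm_sampleCovMatrix ι)).trans ?_
  rw [add_assoc]
  gcongr ?_ + ?_
  · refine Real.sqrt_le_sqrt ?_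
    have : (0 : ℝ) < Fintype.card ι := by exact_mod_cast Fintype.card_pos
    calc 2 * Fintype.card ι * (‖sampleCovMatrix ι‖ ^ 2 * ‖K‖)
        ≤ 2 * Fintype.card ι * ((2 / Fintype.card ι) ^ 2 * ‖K‖) := by
          gcongr; exact norm_sampleCovMatrix_le ι
      _ = 8 * ‖K‖ / Fintype.card ι := by field_simp; ring
  · exact abs_trace_sampleCovMatrix_mul_sub_le K 1

lemma integral_abs_conditionalVariance_sub_one_le (h : IsCenteredGaussian K Z P)
    (hK : ∀ i j, |K i j| ≤ 1) {κ : ℝ} (hκ : 0 ≤ κ) :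
    ∫ ω, |κ * (Z ω ⬝ᵥ (sampleCovMatrix ι * K * sampleCovMatrix ι) *ᵥ Z ω) - 1| ∂P
      ≤ √(32 * κ ^ 2 * ‖K‖ ^ 3 / (Fintype.card ι : ℝ) ^ 3)
        + |κ * ((K * K).trace / (Fintype.card ι : ℝ) ^ 2) - 1|
        + κ * (3 * ‖K‖ ^ 2 / (Fintype.card ι : ℝ) ^ 2) := by
  set A := sampleCovMatrix ι
  have : (0 : ℝ) < Fintype.card ι := by exact_mod_cast Fintype.card_pos
  have hsymm : (κ • (A * K * A)).IsSymm := by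
    rw [Matrix.IsSymm, Matrix.transpose_smul, Matrix.transpose_mul, Matrix.transpose_mul,
      h.isSymm.eq, (isSymm_sampleCovMatrix ι).eq, Matrix.mul_assoc]
  have hnorm : ‖κ • (A * K * A)‖ ≤ κ * (4 * ‖K‖ / (Fintype.card ι : ℝ) ^ 2) := by
    rw [norm_smul, Real.norm_of_nonneg hκ]
    gcongr
    calc ‖A * K * A‖ ≤ ‖A‖ * ‖K‖ * ‖A‖ := by
          refine (Matrix.linfty_opNorm_mul _ _).trans ?_
          gcongr
          exact Matrix.linfty_opNorm_mul _ _
      _ ≤ 2 / Fintype.card ι * ‖K‖ * (2 / Fintype.card ι) := by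
          gcongr <;> exact norm_sampleCovMatrix_le ι
      _ = 4 * ‖K‖ / (Fintype.card ι : ℝ) ^ 2 := by field_simp; ring
  have hquad := h.integral_abs_quadForm_sub_one_le hK hsymm
  simp only [Matrix.smul_mulVec, dotProduct_smul, smul_eq_mul, Matrix.smul_mul,
    Matrix.trace_smul] at hquad
  refine hquad.trans ?_
  rw [add_assoc]
  gcongr ?_ + ?_
  · refine Real.sqrt_le_sqrt ?_
    calc 2 * Fintype.card ι * (‖κ • (A * K * A)‖ ^ 2 * ‖K‖)
        ≤ 2 * Fintype.card ι * ((κ * (4 * ‖K‖ / (Fintype.card ι : ℝ) ^ 2)) ^ 2 * ‖K‖) := by gcongr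
      _ = 32 * κ ^ 2 * ‖K‖ ^ 3 / (Fintype.card ι : ℝ) ^ 3 := by field_simp; ring
  · refine (abs_sub_le _ (κ * ((K * K).trace / (Fintype.card ι : ℝ) ^ 2)) _).trans ?_
    rw [add_comm, ← mul_sub, abs_mul, abs_of_nonneg hκ]
    gcongr
    exact abs_trace_sampleCovMatrix_mul_mul_mul_sub_le K

end IsCenteredGaussian

end SampleCovariance

section Conditioning

lemma abs_measureReal_prod_sub_le {E F : Type*} [MeasurableSpace E] [MeasurableSpace F]
    {μ : Measure E} {ν : Measure F} [IsProbabilityMeasure μ] [IsProbabilityMeasure ν]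
    {S : Set (E × F)} (hS : MeasurableSet S) {p : ℝ} {c : F → ℝ} (hc : Integrable c ν)
    (h : ∀ y, |μ.real ((fun x => (x, y)) ⁻¹' S) - p| ≤ c y) :
    |(μ.prod ν).real S - p| ≤ ∫ y, c y ∂ν := by
  have hmeas := measurable_measure_prodMk_right (μ := μ) hS
  have hint : Integrable (fun y => μ.real ((fun x => (x, y)) ⁻¹' S)) ν :=
    .of_bound (C := 1) hmeas.ennreal_toReal.aestronglyMeasurable <| Eventually.of_forall fun y => by
      rw [Real.norm_of_nonneg measureReal_nonneg]; exact measureReal_le_one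
  have hfubini : (μ.prod ν).real S - p = ∫ y, (μ.real ((fun x => (x, y)) ⁻¹' S) - p) ∂ν := by
    rw [integral_sub hint (integrable_const p), integral_const, probReal_univ, one_smul,
      measureReal_def, Measure.prod_apply_symm hS]
    simp only [measureReal_def]
    rw [integral_toReal hmeas.aemeasurable (Eventually.of_forall fun y => measure_lt_top _ _)]
  rw [hfubini, ← Real.norm_eq_abs]
  exact norm_integral_le_of_norm_le hc (Eventually.of_forall h)

variable {Ξ : Type*} [MeasurableSpace Ξ] {P : Measure Ξ} [IsProbabilityMeasure P]

lemma abs_measureReal_sub_le_integral_of_indepFun {E F : Type*} [MeasurableSpace E]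
    [MeasurableSpace F] {W : Ξ → E} {Z : Ξ → F} (hW : Measurable W) (hZ : Measurable Z)
    (hWZ : IndepFun W Z P) {S : Set (E × F)} (hS : MeasurableSet S) {p : ℝ} {c : F → ℝ}
    (hc : Measurable c) (hcZ : Integrable (fun ω => c (Z ω)) P)
    (h : ∀ z, |P.real {ω | (W ω, z) ∈ S} - p| ≤ c z) :
    |P.real {ω | (W ω, Z ω) ∈ S} - p| ≤ ∫ ω, c (Z ω) ∂P := by
  have := Measure.isProbabilityMeasure_map (μ := P) hW.aemeasurable
  have := Measure.isProbabilityMeasure_map (μ := P) hZ.aemeasurable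
  have hjoint : P.real {ω | (W ω, Z ω) ∈ S} = ((P.map W).prod (P.map Z)).real S := by
    rw [← (indepFun_iff_map_prod_eq_prod_map_map hW.aemeasurable hZ.aemeasurable).1 hWZ,
      map_measureReal_apply (hW.prodMk hZ) hS]
    rfl
  rw [hjoint, ← integral_map hZ.aemeasurable hc.aestronglyMeasurable]
  refine abs_measureReal_prod_sub_le hS
    ((integrable_map_measure hc.aestronglyMeasurable hZ.aemeasurable).2 hcZ) fun z => ?_
  rw [map_measureReal_apply hW (measurable_prodMk_right hS)]
  exact h z

lemma measureReal_nonpos_le_integral_abs_sub_one {f : Ξ → ℝ}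
    (hf : Integrable (fun ω => |f ω - 1|) P) : P.real {ω | f ω ≤ 0} ≤ ∫ ω, |f ω - 1| ∂P := by
  have hmarkov := mul_meas_ge_le_integral_of_nonneg
    (Eventually.of_forall fun ω => abs_nonneg (f ω - 1)) hf 1
  rw [one_mul] at hmarkov
  refine (measureReal_mono fun ω (hω : f ω ≤ 0) => ?_).trans hmarkov
  rw [Set.mem_ofPred_eq, abs_sub_comm]
  exact (by linarith : 1 ≤ 1 - f ω).trans (le_abs_self _)

end Conditioning

section Correlation

lemma div_sqrt_mul_le_iff {N z p q : ℝ} (hp : 0 < p) (hq : 0 < q) (hNp : N ∉ Set.uIoc z (z * p))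
    (hNq : N ∉ Set.uIoc z (z * q)) : N / √(p * q) ≤ z ↔ N ≤ z := by
  have hmean : z * √(p * q) ∈ Set.uIcc (z * p) (z * q) := by
    rw [← Set.image_const_mul_uIcc]
    refine Set.mem_image_of_mem _ (Set.mem_uIcc.2 ?_)
    rcases le_total p q with hpq | hpq
    · exact .inl ⟨Real.le_sqrt_of_sq_le (by nlinarith), Real.sqrt_le_iff.2 ⟨hq.le, by nlinarith⟩⟩
    · exact .inr ⟨Real.le_sqrt_of_sq_le (by nlinarith), Real.sqrt_le_iff.2 ⟨hp.le, by nlinarith⟩⟩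
  rw [div_le_iff₀ (by positivity)]
  rw [Set.mem_uIoc] at hNp hNq
  rw [Set.mem_uIcc] at hmean
  grind

variable {ι : Type*} [Fintype ι]

/-- The correlation coefficient of `w` and `z` for the bilinear form with matrix `A`. For
`A = sampleCovMatrix ι` this is the empirical (Pearson) correlation of the samples `w` and `z`. -/
def corr (A : Matrix ι ι ℝ) (w z : ι → ℝ) : ℝ :=
  (w ⬝ᵥ A *ᵥ z) / √((w ⬝ᵥ A *ᵥ w) * (z ⬝ᵥ A *ᵥ z))

lemma mul_div_sqrt_mul_mul {a : ℝ} (ha : 0 < a) (x y z : ℝ) :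
    a * x / √((a * y) * (a * z)) = x / √(y * z) := by
  rw [mul_mul_mul_comm, sqrt_mul (mul_self_nonneg a), sqrt_mul_self ha.le,
    mul_div_mul_left _ _ ha.ne']

lemma corr_smul_smul (A : Matrix ι ι ℝ) {c : ℝ} (hc : c ≠ 0) (w z : ι → ℝ) :
    corr A (c • w) (c • z) = corr A w z := by
  simp only [corr, Matrix.mulVec_smul, dotProduct_smul, smul_dotProduct, smul_eq_mul, ← mul_assoc c]
  exact mul_div_sqrt_mul_mul (mul_self_pos.2 hc) _ _ _

lemma measurable_corr (A : Matrix ι ι ℝ) : Measurable fun p : (ι → ℝ) × (ι → ℝ) =>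
    corr A p.1 p.2 := by
  unfold corr
  fun_prop

lemma mulVec_dotProduct_mulVec_mulVec {A : Matrix ι ι ℝ} (hA : A.IsSymm) (K : Matrix ι ι ℝ)
    (z : ι → ℝ) : (A *ᵥ z) ⬝ᵥ K *ᵥ A *ᵥ z = z ⬝ᵥ (A * K * A) *ᵥ z := by
  rw [← Matrix.mulVec_mulVec, ← Matrix.mulVec_mulVec, Matrix.dotProduct_mulVec z,
    ← Matrix.mulVec_transpose, hA.eq]

variable {Ξ : Type*} [MeasurableSpace Ξ] {P : Measure Ξ} {K A : Matrix ι ι ℝ} {W Z : Ξ → ι → ℝ}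
  {κ : ℝ}

namespace IsCenteredGaussian

lemma map_sqrt_mul_bilin (hW : IsCenteredGaussian K W P) (hA : A.IsSymm) (hκ : 0 ≤ κ)
    (z : ι → ℝ) : P.map (fun ω => √κ * (W ω ⬝ᵥ A *ᵥ z))
      = gaussianReal 0 (κ * (z ⬝ᵥ (A * K * A) *ᵥ z)).toNNReal := by
  have hvar : (√κ • A *ᵥ z) ⬝ᵥ K *ᵥ (√κ • A *ᵥ z) = κ * (z ⬝ᵥ (A * K * A) *ᵥ z) := by
    simp only [Matrix.mulVec_smul, smul_dotProduct, dotProduct_smul, smul_eq_mul, ← mul_assoc,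
      Real.mul_self_sqrt hκ, mulVec_dotProduct_mulVec_mulVec hA]
  rw [← hvar, ← hW.map_dotProduct]
  simp only [smul_dotProduct, smul_eq_mul, dotProduct_comm (A *ᵥ z)]

lemma integrable_abs_quadForm_sub (hZ : IsCenteredGaussian K Z P) (A : Matrix ι ι ℝ) (a b : ℝ) :
    Integrable (fun ω => |a * (Z ω ⬝ᵥ A *ᵥ Z ω) - b|) P := by
  have := hZ.isProbabilityMeasure
  exact ((((hZ.memLp_quadForm A).integrable one_le_two).const_mul a).sub (integrable_const b)).abs

lemma abs_measureReal_bilin_sub_le (hW : IsCenteredGaussian K W P) (hZ : Measurable Z)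
    (hWZ : IndepFun W Z P) (hA : A.IsSymm) (hκ : 0 ≤ κ) {S : Set (ℝ × (ι → ℝ))}
    (hS : MeasurableSet S) {p : ℝ} {c : (ι → ℝ) → ℝ} (hc : Measurable c)
    (hcZ : Integrable (fun ω => c (Z ω)) P)
    (h : ∀ z, |(gaussianReal 0 (κ * (z ⬝ᵥ (A * K * A) *ᵥ z)).toNNReal).real
      ((fun x => (x, z)) ⁻¹' S) - p| ≤ c z) :
    |P.real {ω | (√κ * (W ω ⬝ᵥ A *ᵥ Z ω), Z ω) ∈ S} - p| ≤ ∫ ω, c (Z ω) ∂P := by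
  have := hW.isProbabilityMeasure
  have hbilin : Measurable fun q : (ι → ℝ) × (ι → ℝ) => (√κ * (q.1 ⬝ᵥ A *ᵥ q.2), q.2) := by
    fun_prop
  refine abs_measureReal_sub_le_integral_of_indepFun hW.measurable hZ hWZ (hbilin hS) hc hcZ
    fun z => ?_
  have hmeas : Measurable fun ω => √κ * (W ω ⬝ᵥ A *ᵥ z) :=
    (by fun_prop : Measurable fun w : ι → ℝ => √κ * (w ⬝ᵥ A *ᵥ z)).comp hW.measurable
  specialize h z
  rwa [← hW.map_sqrt_mul_bilin hA hκ z,
    map_measureReal_apply hmeas (measurable_prodMk_right hS)] at h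

lemma abs_measureReal_bilin_le_sub_stdGaussian_le (hW : IsCenteredGaussian K W P)
    (hZ : IsCenteredGaussian K Z P) (hWZ : IndepFun W Z P) (hA : A.IsSymm) (hκ : 0 ≤ κ) (t : ℝ) :
    |P.real {ω | √κ * (W ω ⬝ᵥ A *ᵥ Z ω) ≤ t} - (gaussianReal 0 1).real (Set.Iic t)|
      ≤ 2 * ∫ ω, |κ * (Z ω ⬝ᵥ (A * K * A) *ᵥ Z ω) - 1| ∂P := by
  rw [← integral_const_mul]
  refine hW.abs_measureReal_bilin_sub_le hZ.measurable hWZ hA hκ (S := {q | q.1 ≤ t})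
    (c := fun z => 2 * |κ * (z ⬝ᵥ (A * K * A) *ᵥ z) - 1|)
    (measurableSet_le (by fun_prop) measurable_const) (by fun_prop)
    ((hZ.integrable_abs_quadForm_sub _ κ 1).const_mul 2) fun z => ?_
  have hvar : 0 ≤ κ * (z ⬝ᵥ (A * K * A) *ᵥ z) := by
    rw [← mulVec_dotProduct_mulVec_mulVec hA]
    exact mul_nonneg hκ (hW.dotProduct_mulVec_self_nonneg _)
  have hgauss := abs_gaussianReal_Iic_sub_stdGaussian_le (κ * (z ⬝ᵥ (A * K * A) *ᵥ z)).toNNReal t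
  rwa [Real.coe_toNNReal _ hvar] at hgauss

lemma measureReal_bilin_mem_uIoc_le (hW : IsCenteredGaussian K W P)
    (hZ : IsCenteredGaussian K Z P) (hWZ : IndepFun W Z P) (hA : A.IsSymm) (hκ : 0 ≤ κ) (t : ℝ) :
    P.real {ω | √κ * (W ω ⬝ᵥ A *ᵥ Z ω) ∈ Set.uIoc t (t * (Z ω ⬝ᵥ A *ᵥ Z ω))}
      ≤ 2 * ∫ ω, |Z ω ⬝ᵥ A *ᵥ Z ω - 1| ∂P := by
  have hS : MeasurableSet {q : ℝ × (ι → ℝ) | q.1 ∈ Set.uIoc t (t * (q.2 ⬝ᵥ A *ᵥ q.2))} := by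
    simp only [Set.mem_uIoc]
    have hform : Measurable fun q : ℝ × (ι → ℝ) => t * (q.2 ⬝ᵥ A *ᵥ q.2) := by fun_prop
    exact ((measurableSet_lt measurable_const measurable_fst).inter
      (measurableSet_le measurable_fst hform)).union
      ((measurableSet_lt hform measurable_fst).inter
      (measurableSet_le measurable_fst measurable_const))
  rw [← integral_const_mul, ← sub_zero (P.real _)]
  refine (le_abs_self _).trans <| hW.abs_measureReal_bilin_sub_le hZ.measurable hWZ hA hκ hS
    (c := fun z => 2 * |z ⬝ᵥ A *ᵥ z - 1|) (by fun_prop)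
    (by simpa using (hZ.integrable_abs_quadForm_sub A 1 1).const_mul 2) fun z => ?_
  rw [sub_zero, abs_of_nonneg measureReal_nonneg]
  exact gaussianReal_uIoc_mul_le (κ * (z ⬝ᵥ (A * K * A) *ᵥ z)).toNNReal t (z ⬝ᵥ A *ᵥ z)

lemma measureReal_symmDiff_corr_le (hW : IsCenteredGaussian K W P)
    (hZ : IsCenteredGaussian K Z P) (hWZ : IndepFun W Z P) (hA : A.IsSymm) (hκ : 0 ≤ κ) (t : ℝ) :
    P.real (symmDiff {ω | √κ * corr A (W ω) (Z ω) ≤ t} {ω | √κ * (W ω ⬝ᵥ A *ᵥ Z ω) ≤ t})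
      ≤ 3 * ∫ ω, |W ω ⬝ᵥ A *ᵥ W ω - 1| ∂P + 3 * ∫ ω, |Z ω ⬝ᵥ A *ᵥ Z ω - 1| ∂P := by
  have := hW.isProbabilityMeasure
  set N : Ξ → ℝ := fun ω => √κ * (W ω ⬝ᵥ A *ᵥ Z ω)
  set p : Ξ → ℝ := fun ω => W ω ⬝ᵥ A *ᵥ W ω
  set q : Ξ → ℝ := fun ω => Z ω ⬝ᵥ A *ᵥ Z ω
  have hbad : symmDiff {ω | √κ * corr A (W ω) (Z ω) ≤ t} {ω | N ω ≤ t}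
      ⊆ ({ω | p ω ≤ 0} ∪ {ω | q ω ≤ 0}) ∪
        ({ω | N ω ∈ Set.uIoc t (t * p ω)} ∪ {ω | N ω ∈ Set.uIoc t (t * q ω)}) := by
    intro ω hω
    by_contra hgood
    simp only [Set.mem_union, Set.mem_ofPred_eq, not_or, not_le] at hgood
    have hiff := div_sqrt_mul_le_iff hgood.1.1 hgood.1.2 hgood.2.1 hgood.2.2
    rw [Set.mem_symmDiff] at hω
    simp only [Set.mem_ofPred_eq, corr, ← mul_div_assoc] at hω
    tauto
  have hp0 := measureReal_nonpos_le_integral_abs_sub_one (P := P) (f := p)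
    (by simpa using hW.integrable_abs_quadForm_sub A 1 1)
  have hq0 := measureReal_nonpos_le_integral_abs_sub_one (P := P) (f := q)
    (by simpa using hZ.integrable_abs_quadForm_sub A 1 1)
  have hNp := hZ.measureReal_bilin_mem_uIoc_le hW hWZ.symm hA hκ t
  simp only [fun ω => dotProduct_mulVec_comm_of_isSymm hA (Z ω) (W ω)] at hNp
  have hNq := hW.measureReal_bilin_mem_uIoc_le hZ hWZ hA hκ t
  have hunion := (measureReal_mono (μ := P) hbad).trans <| (measureReal_union_le _ _).trans <|
    add_le_add (measureReal_union_le _ _) (measureReal_union_le _ _)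
  linarith

lemma abs_measureReal_corr_le_sub_stdGaussian_le (hW : IsCenteredGaussian K W P)
    (hZ : IsCenteredGaussian K Z P) (hWZ : IndepFun W Z P) (hA : A.IsSymm) (hκ : 0 ≤ κ) (t : ℝ) :
    |P.real {ω | √κ * corr A (W ω) (Z ω) ≤ t} - (gaussianReal 0 1).real (Set.Iic t)|
      ≤ 3 * ∫ ω, |W ω ⬝ᵥ A *ᵥ W ω - 1| ∂P + 3 * ∫ ω, |Z ω ⬝ᵥ A *ᵥ Z ω - 1| ∂P
        + 2 * ∫ ω, |κ * (Z ω ⬝ᵥ (A * K * A) *ᵥ Z ω) - 1| ∂P := by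
  have := hW.isProbabilityMeasure
  have hWZm : Measurable fun ω => (W ω, Z ω) := hW.measurable.prodMk hZ.measurable
  have hcorr : MeasurableSet {ω | √κ * corr A (W ω) (Z ω) ≤ t} :=
    measurableSet_le (((measurable_corr A).comp hWZm).const_mul _) measurable_const
  have hbilin : MeasurableSet {ω | √κ * (W ω ⬝ᵥ A *ᵥ Z ω) ≤ t} := measurableSet_le
    (((by fun_prop : Measurable fun x : (ι → ℝ) × (ι → ℝ) => x.1 ⬝ᵥ A *ᵥ x.2).comp
      hWZm).const_mul _) measurable_const
  refine (abs_sub_le _ (P.real {ω | √κ * (W ω ⬝ᵥ A *ᵥ Z ω) ≤ t}) _).trans (add_le_add ?_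
    (hW.abs_measureReal_bilin_le_sub_stdGaussian_le hZ hWZ hA hκ t))
  exact (abs_measureReal_sub_le_measureReal_symmDiff hcorr.nullMeasurableSet
    hbilin.nullMeasurableSet).trans (hW.measureReal_symmDiff_corr_le hZ hWZ hA hκ t)

end IsCenteredGaussian

end Correlation

section Autocovariance

lemma sum_pow_le_inv_one_sub_of_injOn {ι : Type*} {a : ℝ} (h0 : 0 ≤ a) (h1 : a < 1)
    {s : Finset ι} {f : ι → ℕ} (hf : Set.InjOn f s) : ∑ k ∈ s, a ^ f k ≤ (1 - a)⁻¹ := by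
  rw [← Finset.sum_image (g := f) (f := fun m => a ^ m) hf, ← tsum_geometric_of_lt_one h0 h1]
  exact (summable_geometric_of_lt_one h0 h1).sum_le_tsum _ fun m _ => pow_nonneg h0 m

lemma sum_pow_dist_le {a : ℝ} (h0 : 0 ≤ a) (h1 : a < 1) (s : Finset ℕ) (i : ℕ) :
    ∑ j ∈ s, a ^ Nat.dist i j ≤ 2 * (1 - a)⁻¹ := by
  rw [← Finset.sum_filter_add_sum_filter_not s (fun j => j ≤ i), two_mul]
  refine add_le_add ?_ ?_ <;>
  · refine sum_pow_le_inv_one_sub_of_injOn h0 h1 fun j hj k hk hjk => ?_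
    simp only [Finset.coe_filter, Set.mem_ofPred_eq] at hj hk
    simp only [Nat.dist] at hjk
    omega

lemma one_sub_mul_sum_range_pow_dist (b : ℝ) {i n : ℕ} (hi : i < n) :
    (1 - b) * ∑ j ∈ range n, b ^ Nat.dist i j = 1 + b - b ^ (i + 1) - b ^ (n - i) := by
  induction n, hi using Nat.le_induction with
  | base =>
    have hreflect : ∑ j ∈ range (i + 1), b ^ Nat.dist i j = ∑ j ∈ range (i + 1), b ^ j := by
      rw [← Finset.sum_range_reflect (fun j => b ^ j)]
      refine Finset.sum_congr rfl fun j hj => ?_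
      rw [Nat.dist_eq_sub_of_le_right (by simpa [Nat.lt_succ_iff] using hj), Nat.add_sub_cancel]
    rw [hreflect, mul_neg_geom_sum, Nat.succ_eq_add_one, Nat.add_sub_cancel_left]
    ring
  | succ n hn ih =>
    have hin : i ≤ n := Nat.le_of_succ_le hn
    rw [Finset.sum_range_succ, mul_add, ih, Nat.dist_eq_sub_of_le hin, Nat.succ_sub hin,
      pow_succ b (n - i)]
    ring

/-- Covariance matrix of `√(2θ) X(0), √(2θ) X(Δ), …, √(2θ) X((n - 1)Δ)` for the Ornstein–Uhlenbeck
process `X` started at `0`, in terms of the one-step autoregression coefficient `a = exp (-θΔ)`. -/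
def ouCovMatrix (a : ℝ) (n : ℕ) : Matrix (Fin n) (Fin n) ℝ :=
  Matrix.of fun i j => a ^ Nat.dist i j - a ^ (i + j : ℕ)

variable {a : ℝ} {n : ℕ}

lemma ouCovMatrix_apply (i j : Fin n) :
    ouCovMatrix a n i j = a ^ Nat.dist i j - a ^ (i + j : ℕ) := rfl

lemma ouCovMatrix_apply_nonneg (h0 : 0 ≤ a) (h1 : a ≤ 1) (i j : Fin n) :
    0 ≤ ouCovMatrix a n i j :=
  sub_nonneg.2 <| pow_le_pow_of_le_one h0 h1 <| by rw [Nat.dist]; omega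

lemma ouCovMatrix_apply_le (h0 : 0 ≤ a) (i j : Fin n) :
    ouCovMatrix a n i j ≤ a ^ Nat.dist i j :=
  sub_le_self _ (pow_nonneg h0 _)

lemma abs_ouCovMatrix_apply_le_one (h0 : 0 ≤ a) (h1 : a ≤ 1) (i j : Fin n) :
    |ouCovMatrix a n i j| ≤ 1 := by
  rw [abs_of_nonneg (ouCovMatrix_apply_nonneg h0 h1 i j)]
  exact (ouCovMatrix_apply_le h0 i j).trans (pow_le_one₀ h0 h1)

open scoped Matrix.Norms.Operator in
lemma norm_ouCovMatrix_le (h0 : 0 ≤ a) (h1 : a < 1) :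
    ‖ouCovMatrix a n‖ ≤ 2 * (1 - a)⁻¹ := by
  have : 0 < 1 - a := sub_pos.2 h1
  refine linfty_opNorm_le_of_forall_sum_abs_le (by positivity) fun i => ?_
  calc ∑ j, |ouCovMatrix a n i j|
      ≤ ∑ j : Fin n, a ^ Nat.dist i j := Finset.sum_le_sum fun j _ => by
        rw [abs_of_nonneg (ouCovMatrix_apply_nonneg h0 h1.le i j)]
        exact ouCovMatrix_apply_le h0 i j
    _ = ∑ j ∈ range n, a ^ Nat.dist i j := Fin.sum_univ_eq_sum_range (fun j => a ^ Nat.dist i j) n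
    _ ≤ 2 * (1 - a)⁻¹ := sum_pow_dist_le h0 h1 _ _

lemma abs_trace_ouCovMatrix_sub_le (h0 : 0 ≤ a) (h1 : a < 1) :
    |(ouCovMatrix a n).trace - n| ≤ (1 - a)⁻¹ := by
  have htrace : (ouCovMatrix a n).trace - n = -∑ i : Fin n, a ^ (i + i : ℕ) := by
    simp [Matrix.trace, ouCovMatrix_apply, Nat.dist_self]
  rw [htrace, abs_neg, abs_of_nonneg (Finset.sum_nonneg fun i _ => pow_nonneg h0 _)]
  exact sum_pow_le_inv_one_sub_of_injOn h0 h1 fun i _ j _ hij => by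
    ext; omega

lemma abs_ouCovMatrix_apply_sq_sub_le (h0 : 0 ≤ a) (h1 : a ≤ 1) (i j : Fin n) :
    |ouCovMatrix a n i j ^ 2 - (a ^ 2) ^ Nat.dist i j| ≤ 2 * a ^ (i + j : ℕ) := by
  have hnonneg := ouCovMatrix_apply_nonneg h0 h1 i j
  have hdist : a ^ Nat.dist i j ≤ 1 := pow_le_one₀ h0 h1
  have hadd : 0 ≤ a ^ (i + j : ℕ) := pow_nonneg h0 _
  rw [ouCovMatrix_apply] at hnonneg ⊢
  rw [pow_right_comm a 2, abs_le]
  constructor <;> nlinarith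

lemma abs_sum_ouCovMatrix_apply_sq_sub_le (h0 : 0 ≤ a) (h1 : a < 1) (i : Fin n) :
    |∑ j, ouCovMatrix a n i j ^ 2 - (1 + a ^ 2) / (1 - a ^ 2)|
      ≤ (2 * a ^ (i : ℕ) + (a ^ ((i : ℕ) + 1) + a ^ (n - i : ℕ))) * (1 - a)⁻¹ := by
  have : 0 < 1 - a := sub_pos.2 h1
  have hsq : a ^ 2 ≤ a := by nlinarith
  have hrow : ∑ j : Fin n, (a ^ 2) ^ Nat.dist i j - (1 + a ^ 2) / (1 - a ^ 2)
      = -(((a ^ 2) ^ ((i : ℕ) + 1) + (a ^ 2) ^ (n - i : ℕ)) * (1 - a ^ 2)⁻¹) := by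
    have hidentity := one_sub_mul_sum_range_pow_dist (a ^ 2) i.isLt
    rw [Fin.sum_univ_eq_sum_range (fun j => (a ^ 2) ^ Nat.dist i j) n]
    have hne : 1 - a ^ 2 ≠ 0 := by nlinarith
    field_simp
    linarith
  have hfirst : |∑ j, ouCovMatrix a n i j ^ 2 - ∑ j : Fin n, (a ^ 2) ^ Nat.dist i j|
      ≤ 2 * a ^ (i : ℕ) * (1 - a)⁻¹ := by
    rw [← Finset.sum_sub_distrib]
    calc _ ≤ ∑ j : Fin n, 2 * a ^ (i + j : ℕ) := (Finset.abs_sum_le_sum_abs _ _).trans <|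
          Finset.sum_le_sum fun j _ => abs_ouCovMatrix_apply_sq_sub_le h0 h1.le i j
      _ = 2 * a ^ (i : ℕ) * ∑ j : Fin n, a ^ (j : ℕ) := by
          simp only [pow_add, Finset.mul_sum, mul_assoc]
      _ ≤ _ := by
          gcongr
          exact sum_pow_le_inv_one_sub_of_injOn h0 h1 Fin.val_injective.injOn
  have hsecond : |∑ j : Fin n, (a ^ 2) ^ Nat.dist i j - (1 + a ^ 2) / (1 - a ^ 2)|
      ≤ (a ^ ((i : ℕ) + 1) + a ^ (n - i : ℕ)) * (1 - a)⁻¹ := by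
    have hpos : 0 < 1 - a ^ 2 := by linarith
    rw [hrow, abs_neg, abs_of_nonneg (by positivity)]
    gcongr
  rw [add_mul]
  exact (abs_sub_le _ _ _).trans (add_le_add hfirst hsecond)

lemma abs_trace_ouCovMatrix_mul_self_sub_le (h0 : 0 ≤ a) (h1 : a < 1) :
    |(ouCovMatrix a n * ouCovMatrix a n).trace - n * ((1 + a ^ 2) / (1 - a ^ 2))|
      ≤ 4 * (1 - a)⁻¹ ^ 2 := by
  have : 0 < 1 - a := sub_pos.2 h1
  have htrace : (ouCovMatrix a n * ouCovMatrix a n).trace - n * ((1 + a ^ 2) / (1 - a ^ 2))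
      = ∑ i, (∑ j, ouCovMatrix a n i j ^ 2 - (1 + a ^ 2) / (1 - a ^ 2)) := by
    simp [Matrix.trace, Matrix.mul_apply, ouCovMatrix_apply, Nat.dist_comm, add_comm, sq]
  have hval : ∑ i : Fin n, a ^ (i : ℕ) ≤ (1 - a)⁻¹ :=
    sum_pow_le_inv_one_sub_of_injOn h0 h1 Fin.val_injective.injOn
  have hsucc : ∑ i : Fin n, a ^ ((i : ℕ) + 1) ≤ (1 - a)⁻¹ :=
    sum_pow_le_inv_one_sub_of_injOn h0 h1 fun i _ j _ hij => by
      ext; omega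
  have hreflect : ∑ i : Fin n, a ^ (n - i : ℕ) ≤ (1 - a)⁻¹ :=
    sum_pow_le_inv_one_sub_of_injOn h0 h1 fun i _ j _ hij => by
      ext; omega
  rw [htrace]
  calc _ ≤ ∑ i : Fin n, (2 * a ^ (i : ℕ) + (a ^ ((i : ℕ) + 1) + a ^ (n - i : ℕ))) * (1 - a)⁻¹ :=
        (Finset.abs_sum_le_sum_abs _ _).trans <|
          Finset.sum_le_sum fun i _ => abs_sum_ouCovMatrix_apply_sq_sub_le h0 h1 i
    _ = (2 * ∑ i : Fin n, a ^ (i : ℕ)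
          + (∑ i : Fin n, a ^ ((i : ℕ) + 1) + ∑ i : Fin n, a ^ (n - i : ℕ))) * (1 - a)⁻¹ := by
        rw [← Finset.sum_mul, Finset.sum_add_distrib, Finset.sum_add_distrib, Finset.mul_sum]
    _ ≤ (2 * (1 - a)⁻¹ + ((1 - a)⁻¹ + (1 - a)⁻¹)) * (1 - a)⁻¹ := by gcongr
    _ = 4 * (1 - a)⁻¹ ^ 2 := by ring

end Autocovariance

section SmallMesh

variable {x : ℝ} {n : ℕ}

lemma inv_one_sub_exp_neg_le (h0 : 0 < x) (h1 : x ≤ 1) : (1 - exp (-x))⁻¹ ≤ 2 / x := by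
  have hexp : exp (-x) ≤ 1 - x / 2 := by
    rw [exp_neg, inv_le_comm₀ (exp_pos _) (by linarith)]
    refine le_trans ?_ (add_one_le_exp x)
    rw [inv_le_iff_one_le_mul₀ (by linarith)]
    nlinarith
  calc (1 - exp (-x))⁻¹ ≤ (x / 2)⁻¹ := by gcongr; linarith
    _ = 2 / x := inv_div _ _

-- Both bounds come from `1 + y ≤ exp y`, at `y = 2x` and `y = -2x`.
lemma abs_mul_one_add_exp_neg_sq_div_sub_one_le (h0 : 0 < x) :
    |x * ((1 + exp (-x) ^ 2) / (1 - exp (-x) ^ 2)) - 1| ≤ x := by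
  have hsq : exp (-x) ^ 2 = exp (-(2 * x)) := by rw [← exp_nat_mul]; congr 1; push_cast; ring
  have hlt : exp (-(2 * x)) < 1 := by rw [exp_lt_one_iff]; linarith
  have hupper : exp (-(2 * x)) * (1 + 2 * x) ≤ 1 := by
    rw [exp_neg, inv_mul_le_iff₀ (exp_pos _), mul_one]
    linarith [add_one_le_exp (2 * x)]
  have hlower := add_one_le_exp (-(2 * x))
  rw [hsq, ← mul_div_assoc, abs_le, neg_le_sub_iff_le_add, sub_le_iff_le_add,
    ← sub_le_iff_le_add, le_div_iff₀ (by linarith), div_le_iff₀ (by linarith)]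
  constructor <;> nlinarith

lemma abs_trace_ouCovMatrix_exp_neg_div_sub_one_le (h0 : 0 < x) (h1 : x ≤ 1) (hn : 0 < n) :
    |(ouCovMatrix (exp (-x)) n).trace / n - 1| ≤ 2 * (n * x)⁻¹ := by
  have hn' : (0 : ℝ) < n := by exact_mod_cast hn
  have hexp : exp (-x) < 1 := by rw [exp_lt_one_iff]; linarith
  calc |(ouCovMatrix (exp (-x)) n).trace / n - 1|
      = |(ouCovMatrix (exp (-x)) n).trace - n| / n := by
        rw [div_sub_one hn'.ne', abs_div, abs_of_pos hn']
    _ ≤ 2 / x / n := by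
        gcongr
        exact (abs_trace_ouCovMatrix_sub_le (exp_pos _).le hexp).trans
          (inv_one_sub_exp_neg_le h0 h1)
    _ = 2 * (n * x)⁻¹ := by rw [div_div, mul_comm x, div_eq_mul_inv]

lemma abs_trace_ouCovMatrix_exp_neg_mul_self_div_sub_one_le (h0 : 0 < x) (h1 : x ≤ 1)
    (hn : 0 < n) :
    |n * x * ((ouCovMatrix (exp (-x)) n * ouCovMatrix (exp (-x)) n).trace / n ^ 2) - 1|
      ≤ x + 16 * (n * x)⁻¹ := by
  have : (0 : ℝ) < n := by exact_mod_cast hn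
  have hexp : exp (-x) < 1 := by rw [exp_lt_one_iff]; linarith
  set a := exp (-x)
  set q := (1 + a ^ 2) / (1 - a ^ 2)
  have hsplit : n * x * ((ouCovMatrix a n * ouCovMatrix a n).trace / n ^ 2) - 1
      = (x * q - 1) + x / n * ((ouCovMatrix a n * ouCovMatrix a n).trace - n * q) := by
    field_simp
    ring
  have htrace := abs_trace_ouCovMatrix_mul_self_sub_le (n := n) (exp_pos (-x)).le hexp
  have hinv : (1 - a)⁻¹ ^ 2 ≤ (2 / x) ^ 2 :=
    pow_le_pow_left₀ (inv_nonneg.2 (by linarith)) (inv_one_sub_exp_neg_le h0 h1) 2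
  rw [hsplit]
  refine (abs_add_le _ _).trans
    (add_le_add (abs_mul_one_add_exp_neg_sq_div_sub_one_le h0) ?_)
  rw [abs_mul, abs_of_pos (by positivity : 0 < x / n)]
  calc _ ≤ x / n * (4 * (2 / x) ^ 2) := by gcongr; exact htrace.trans (by gcongr)
    _ = 16 * (n * x)⁻¹ := by field_simp; norm_num

lemma abs_ouCovMatrix_exp_neg_apply_le_one (h0 : 0 ≤ x) (i j : Fin n) :
    |ouCovMatrix (exp (-x)) n i j| ≤ 1 :=
  abs_ouCovMatrix_apply_le_one (exp_pos _).le (exp_le_one_iff.2 (neg_nonpos.2 h0)) i j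

open scoped Matrix.Norms.Operator in
lemma norm_ouCovMatrix_exp_neg_le (h0 : 0 < x) (h1 : x ≤ 1) :
    ‖ouCovMatrix (exp (-x)) n‖ ≤ 4 / x :=
  calc _ ≤ 2 * (1 - exp (-x))⁻¹ :=
        norm_ouCovMatrix_le (exp_pos _).le (by rw [exp_lt_one_iff]; linarith)
    _ ≤ 2 * (2 / x) := by gcongr; exact inv_one_sub_exp_neg_le h0 h1
    _ = 4 / x := by ring

end SmallMesh

section AutoregressiveSample

open scoped Matrix.Norms.Operator

variable {Ξ : Type*} [MeasurableSpace Ξ] {P : Measure Ξ} {x : ℝ} {n : ℕ} {W Z : Ξ → Fin n → ℝ}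

namespace IsCenteredGaussian

lemma integral_abs_ou_sampleVariance_sub_one_le
    (h : IsCenteredGaussian (ouCovMatrix (exp (-x)) n) Z P)
    (h0 : 0 < x) (h1 : x ≤ 1) (hnx : 1 ≤ n * x) :
    ∫ ω, |Z ω ⬝ᵥ sampleCovMatrix (Fin n) *ᵥ Z ω - 1| ∂P ≤ 12 * (√(n * x))⁻¹ := by
  have hn : 0 < n := Nat.cast_pos.1 (pos_of_mul_pos_left (one_pos.trans_le hnx) h0.le)
  have : NeZero n := ⟨hn.ne'⟩
  have hnorm := norm_ouCovMatrix_exp_neg_le (n := n) h0 h1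
  have hvariance : √(8 * ‖ouCovMatrix (exp (-x)) n‖ / n) ≤ 6 * (√(n * x))⁻¹ :=
    calc _ ≤ √(6 ^ 2 * (n * x)⁻¹) := by
          refine sqrt_le_sqrt ?_
          calc _ ≤ 8 * (4 / x) / n := by gcongr
            _ = 32 * (n * x)⁻¹ := by field_simp; norm_num
            _ ≤ 6 ^ 2 * (n * x)⁻¹ := by gcongr; norm_num
      _ = 6 * (√(n * x))⁻¹ := by
          rw [sqrt_mul (by positivity), sqrt_sq (by positivity), sqrt_inv]
  have hdrift : ‖ouCovMatrix (exp (-x)) n‖ / n ≤ 4 * (n * x)⁻¹ :=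
    calc _ ≤ 4 / x / n := by gcongr
      _ = 4 * (n * x)⁻¹ := by field_simp
  have htrace := abs_trace_ouCovMatrix_exp_neg_div_sub_one_le h0 h1 hn
  have hbound := h.integral_abs_sampleVariance_sub_one_le
    (abs_ouCovMatrix_exp_neg_apply_le_one h0.le)
  rw [Fintype.card_fin] at hbound
  have hrate : (n * x)⁻¹ ≤ (√(n * x))⁻¹ := 
    inv_anti₀ (by positivity) (sqrt_le_self_iff.2 (.inr hnx))
  linarith

lemma integral_abs_ou_conditionalVariance_sub_one_le
    (h : IsCenteredGaussian (ouCovMatrix (exp (-x)) n) Z P)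
    (h0 : 0 < x) (h1 : x ≤ 1) (hnx : 1 ≤ n * x) :
    ∫ ω, |n * x * (Z ω ⬝ᵥ (sampleCovMatrix (Fin n) * ouCovMatrix (exp (-x)) n
        * sampleCovMatrix (Fin n)) *ᵥ Z ω) - 1| ∂P ≤ 110 * (√(n * x))⁻¹ + x := by
  have hn : 0 < n := Nat.cast_pos.1 (pos_of_mul_pos_left (one_pos.trans_le hnx) h0.le)
  have : NeZero n := ⟨hn.ne'⟩
  have hnorm := norm_ouCovMatrix_exp_neg_le (n := n) h0 h1
  have hvariance : √(32 * (n * x) ^ 2 * ‖ouCovMatrix (exp (-x)) n‖ ^ 3 / (n : ℝ) ^ 3)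
      ≤ 46 * (√(n * x))⁻¹ :=
    calc _ ≤ √(46 ^ 2 * (n * x)⁻¹) := by
          refine sqrt_le_sqrt ?_
          calc _ ≤ 32 * (n * x) ^ 2 * (4 / x) ^ 3 / (n : ℝ) ^ 3 := by gcongr
            _ = 2048 * (n * x)⁻¹ := by field_simp; norm_num
            _ ≤ 46 ^ 2 * (n * x)⁻¹ := by gcongr; norm_num
      _ = 46 * (√(n * x))⁻¹ := by
          rw [sqrt_mul (by positivity), sqrt_sq (by positivity), sqrt_inv]
  have hdrift : n * x * (3 * ‖ouCovMatrix (exp (-x)) n‖ ^ 2 / (n : ℝ) ^ 2) ≤ 48 * (n * x)⁻¹ :=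
    calc _ ≤ n * x * (3 * (4 / x) ^ 2 / (n : ℝ) ^ 2) := by gcongr
      _ = 48 * (n * x)⁻¹ := by field_simp; norm_num
  have htrace := abs_trace_ouCovMatrix_exp_neg_mul_self_div_sub_one_le h0 h1 hn
  have hbound := h.integral_abs_conditionalVariance_sub_one_le
    (abs_ouCovMatrix_exp_neg_apply_le_one h0.le) (κ := n * x) (by positivity)
  rw [Fintype.card_fin] at hbound
  have hrate : (n * x)⁻¹ ≤ (√(n * x))⁻¹ := 
    inv_anti₀ (by positivity) (sqrt_le_self_iff.2 (.inr hnx))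
  linarith

lemma abs_measureReal_ou_corr_le_sub_stdGaussian_le [IsProbabilityMeasure P]
    (hW : IsCenteredGaussian (ouCovMatrix (exp (-x)) n) W P)
    (hZ : IsCenteredGaussian (ouCovMatrix (exp (-x)) n) Z P) (hWZ : IndepFun W Z P)
    (h0 : 0 < x) (hn : 0 < n) (t : ℝ) :
    |P.real {ω | √(n * x) * corr (sampleCovMatrix (Fin n)) (W ω) (Z ω) ≤ t}
        - (gaussianReal 0 1).real (Set.Iic t)| ≤ 292 * (√(n * x))⁻¹ + 2 * x := by
  by_cases hsmall : x ≤ 1 ∧ 1 ≤ n * x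
  · obtain ⟨h1, hnx⟩ := hsmall
    have hcore := hW.abs_measureReal_corr_le_sub_stdGaussian_le hZ hWZ
      (isSymm_sampleCovMatrix (Fin n)) (by positivity : 0 ≤ n * x) t
    have hsampleW := hW.integral_abs_ou_sampleVariance_sub_one_le h0 h1 hnx
    have hsampleZ := hZ.integral_abs_ou_sampleVariance_sub_one_le h0 h1 hnx
    have hcond := hZ.integral_abs_ou_conditionalVariance_sub_one_le h0 h1 hnx
    linarith
  · have htrivial : |P.real {ω | √(n * x) * corr (sampleCovMatrix (Fin n)) (W ω) (Z ω) ≤ t}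
        - (gaussianReal 0 1).real (Set.Iic t)| ≤ 1 :=
      abs_sub_le_of_nonneg_of_le measureReal_nonneg measureReal_le_one
        measureReal_nonneg measureReal_le_one
    refine htrivial.trans ?_
    rcases not_and_or.1 hsmall with hx | hnx
    · have : 0 ≤ (√(n * x))⁻¹ := by positivity
      linarith
    · have : 1 ≤ (√(n * x))⁻¹ :=
        (one_le_inv₀ (by positivity)).2 (sqrt_le_one.2 (not_le.1 hnx).le)
      linarith

end IsCenteredGaussian

end AutoregressiveSample

section KolmogorovDistance

lemma dKol_nonneg (μ ν : Measure ℝ) : 0 ≤ dKol μ ν := Real.iSup_nonneg fun _ => abs_nonneg _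

lemma dKol_map_const_mul (μ ν : Measure ℝ) {c : ℝ} (hc : 0 < c) :
    dKol (μ.map (c * ·)) (ν.map (c * ·)) = dKol μ ν := by
  have hpreimage (z : ℝ) : (c * ·) ⁻¹' Set.Iic (c * z) = Set.Iic z := by
    ext y; simp [mul_le_mul_iff_right₀ hc]
  refine (Equiv.iSup_congr (Equiv.mulLeft₀ c hc.ne') fun z => ?_).symm
  rw [Equiv.mulLeft₀_apply, Measure.map_apply (measurable_const_mul c) measurableSet_Iic,
    Measure.map_apply (measurable_const_mul c) measurableSet_Iic, hpreimage]

lemma map_const_mul_gaussianReal_one_div {θ : ℝ} (hθ : 0 < θ) :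
    (gaussianReal 0 (1 / θ).toNNReal).map (√θ * ·) = gaussianReal 0 1 := by
  rw [gaussianReal_map_const_mul, mul_zero]
  congr 1
  ext
  simp [sq_sqrt hθ.le, Real.coe_toNNReal _ (inv_nonneg.2 hθ.le), hθ.ne']

end KolmogorovDistance

section OrnsteinUhlenbeck

variable {Ξ : Type} {θ : ℝ} {X : Fin 2 → ℝ → Ω → ℝ}

/-- The sample `Y(0), Y(Δ), …, Y((n - 1)Δ)` multiplied by `√(2θ)`; for the Ornstein–Uhlenbeck
process this normalizes the stationary variance to `1`. -/
def ouSample (θ : ℝ) (Y : ℝ → Ξ → ℝ) (n : ℕ) (Δ : ℝ) (ω : Ξ) : Fin n → ℝ :=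
  √(2 * θ) • fun k : Fin n => Y (k * Δ) ω

lemma ouYtilde_eq_dotProduct (X : Fin 2 → ℝ → Ξ → ℝ) (i j : Fin 2) (n : ℕ) (Δ : ℝ) (ω : Ξ) :
    ouYtilde X i j n Δ ω = n * Δ * ((fun k : Fin n => X i (k * Δ) ω) ⬝ᵥ
      sampleCovMatrix (Fin n) *ᵥ fun k : Fin n => X j (k * Δ) ω) := by
  rw [dotProduct_sampleCovMatrix_mulVec, Fintype.card_fin,
    Fin.sum_univ_eq_sum_range (fun k => X i (k * Δ) ω * X j (k * Δ) ω),
    Fin.sum_univ_eq_sum_range (fun k => X i (k * Δ) ω),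
    Fin.sum_univ_eq_sum_range (fun k => X j (k * Δ) ω), ouYtilde, ouXtilde, ouXtilde]
  rcases Nat.eq_zero_or_pos n with rfl | hn
  · simp
  · field_simp

lemma ouRhoTilde_eq_corr (hθ : 0 < θ) (X : Fin 2 → ℝ → Ξ → ℝ) {n : ℕ} (hn : 0 < n) {Δ : ℝ}
    (hΔ : 0 < Δ) (ω : Ξ) :
    ouRhoTilde X n Δ ω
      = corr (sampleCovMatrix (Fin n)) (ouSample θ (X 0) n Δ ω) (ouSample θ (X 1) n Δ ω) := by
  rw [ouSample, ouSample, corr_smul_smul _ (sqrt_pos.2 (by positivity)).ne', ouRhoTilde]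
  simp only [ouYtilde_eq_dotProduct]
  exact mul_div_sqrt_mul_mul (by positivity) _ _ _

lemma abs_natCast_mul_sub_natCast_mul {Δ : ℝ} (hΔ : 0 ≤ Δ) (i j : ℕ) :
    |(j : ℝ) * Δ - i * Δ| = Nat.dist i j * Δ := by
  rw [← sub_mul, abs_mul, abs_of_nonneg hΔ]
  congr 1
  rcases le_total i j with h | h
  · rw [Nat.dist_eq_sub_of_le h, Nat.cast_sub h, abs_of_nonneg (by simpa using h)]
  · rw [Nat.dist_eq_sub_of_le_right h, Nat.cast_sub h, abs_of_nonpos (by simpa using h), neg_sub]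

lemma IsOUPair.measurable_ouSample (hX : IsOUPair θ X) (i : Fin 2) (n : ℕ) (Δ : ℝ) :
    Measurable (ouSample θ (X i) n Δ) :=
  measurable_pi_lambda _ fun _ => (hX.meas i _).const_mul _

lemma IsOUPair.isCenteredGaussian_ouSample (hX : IsOUPair θ X) (hθ : 0 < θ) (i : Fin 2) (n : ℕ)
    {Δ : ℝ} (hΔ : 0 ≤ Δ) :
    IsCenteredGaussian (ouCovMatrix (exp (-(θ * Δ))) n) (ouSample θ (X i) n Δ) ℙ := by
  refine .of_forall_map_dotProduct (hX.measurable_ouSample i n Δ) (fun c => ?_) fun j k => ?_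
  · have hsum : (fun ω => c ⬝ᵥ ouSample θ (X i) n Δ ω)
        = fun ω => ∑ k, c k * √(2 * θ) * X i (k * Δ) ω := by
      simp only [dotProduct, ouSample, Pi.smul_apply, smul_eq_mul, mul_assoc]
    rw [hsum]
    exact hX.gaussian i n _ _ fun k => by positivity
  · have hscale (ω : Ω) : ouSample θ (X i) n Δ ω j * ouSample θ (X i) n Δ ω k
        = 2 * θ * (X i (j * Δ) ω * X i (k * Δ) ω) := by
      rw [ouSample, Pi.smul_apply, Pi.smul_apply, smul_eq_mul, smul_eq_mul, mul_mul_mul_comm,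
        mul_self_sqrt (by positivity)]
    simp only [hscale]
    rw [integral_const_mul,
      hX.cov i _ _ (by positivity) (by positivity), abs_natCast_mul_sub_natCast_mul hΔ,
      mul_div_cancel₀ _ (by positivity), ouCovMatrix_apply, ← exp_nat_mul, ← exp_nat_mul]
    push_cast
    ring_nf

lemma IsOUPair.indepFun_ouSample (hX : IsOUPair θ X) (n : ℕ) (Δ : ℝ) :
    IndepFun (ouSample θ (X 0) n Δ) (ouSample θ (X 1) n Δ) ℙ := by
  have hsample : Measurable fun (y : ℝ → ℝ) (k : Fin n) => √(2 * θ) * y (k * Δ) := by fun_prop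
  exact hX.indep.comp hsample hsample

lemma IsOUPair.measurable_ouRhoTilde (hX : IsOUPair θ X) (n : ℕ) (Δ : ℝ) :
    Measurable (ouRhoTilde X n Δ) := by
  have := hX.meas
  unfold ouRhoTilde ouYtilde ouXtilde
  fun_prop

theorem IsOUPair.dKol_ouRhoTilde_le [IsProbabilityMeasure (ℙ : Measure Ω)] (hX : IsOUPair θ X)
    (hθ : 0 < θ) {n : ℕ} (hn : 0 < n) {Δ : ℝ} (hΔ : 0 < Δ) :
    dKol (Measure.map (fun ω => √θ * √(n * Δ) * ouRhoTilde X n Δ ω) ℙ) (gaussianReal 0 1)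
      ≤ 292 / √θ * (1 / √(n * Δ)) + 2 * θ * Δ := by
  refine ciSup_le fun z => ?_
  have hcorr := (hX.isCenteredGaussian_ouSample hθ 0 n hΔ.le)
    |>.abs_measureReal_ou_corr_le_sub_stdGaussian_le (hX.isCenteredGaussian_ouSample hθ 1 n hΔ.le)
      (hX.indepFun_ouSample n Δ) (by positivity) hn z
  simp only [← ouRhoTilde_eq_corr hθ X hn hΔ] at hcorr
  rw [Measure.map_apply (by have := hX.measurable_ouRhoTilde n Δ; fun_prop) measurableSet_Iic,
    ← sqrt_mul hθ.le, div_mul_div_comm, mul_one, ← sqrt_mul hθ.le, mul_left_comm θ, div_eq_mul_inv,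
    mul_assoc 2]
  exact hcorr

lemma IsOUPair.dKol_ouRhoTilde_one_div_eq (hX : IsOUPair θ X) (hθ : 0 < θ) (n : ℕ) (Δ : ℝ) :
    dKol (Measure.map (fun ω => √(n * Δ) * ouRhoTilde X n Δ ω) ℙ)
        (gaussianReal 0 (1 / θ).toNNReal)
      = dKol (Measure.map (fun ω => √θ * √(n * Δ) * ouRhoTilde X n Δ ω) ℙ) (gaussianReal 0 1) := by
  have := hX.measurable_ouRhoTilde n Δ
  rw [← dKol_map_const_mul _ _ (sqrt_pos.2 hθ), map_const_mul_gaussianReal_one_div hθ,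
    Measure.map_map (measurable_const_mul _) (by fun_prop)]
  simp only [Function.comp_def, mul_assoc]

end OrnsteinUhlenbeck

section Rate

lemma le_mul_sq_rpow_one_third {s Δ : ℝ} (hΔ : 0 ≤ Δ) (hs : Δ ≤ s) :
    Δ ≤ (s * Δ ^ 2) ^ (1 / 3 : ℝ) :=
  calc Δ = (Δ * Δ ^ 2) ^ (1 / 3 : ℝ) := by
        rw [← pow_succ', ← rpow_natCast, ← rpow_mul hΔ]; norm_num
    _ ≤ (s * Δ ^ 2) ^ (1 / 3 : ℝ) := by gcongr

lemma exists_forall_ge_le_mul_log_mul_max {Δ d : ℕ → ℝ} {A B : ℝ} (hA : 0 < A) (hB : 0 ≤ B)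
    (hΔpos : ∀ n, 0 < Δ n) (hΔ0 : Tendsto Δ atTop (𝓝 0))
    (hT : Tendsto (fun n : ℕ => (n : ℝ) * Δ n) atTop atTop)
    (hd : ∀ n : ℕ, 0 < n → d n ≤ A * (1 / √(n * Δ n)) + B * Δ n) :
    ∃ c : ℝ, 0 < c ∧ ∃ n₀ : ℕ, ∀ n : ℕ, n₀ ≤ n →
      d n ≤ c * log (n * Δ n) * max (1 / √(n * Δ n)) ((n * Δ n ^ 2) ^ (1 / 3 : ℝ)) := by
  refine ⟨A + B, by positivity, eventually_atTop.1 ?_⟩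
  filter_upwards [eventually_gt_atTop 0, hΔ0.eventually (eventually_le_nhds zero_lt_one),
    hT.eventually_ge_atTop (exp 1)] with n hn hΔ1 hTn
  have hn' : (1 : ℝ) ≤ n := by exact_mod_cast hn
  have hlog : 1 ≤ log (n * Δ n) :=
    (le_log_iff_exp_le (by have := hΔpos n; positivity)).2 hTn
  set m := max (1 / √(n * Δ n)) ((n * Δ n ^ 2) ^ (1 / 3 : ℝ))
  have : 0 ≤ m := le_max_of_le_left (by positivity)
  calc d n ≤ A * (1 / √(n * Δ n)) + B * Δ n := hd n hn
    _ ≤ A * m + B * m := by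
        gcongr
        · exact le_max_left _ _
        · exact le_max_of_le_right (le_mul_sq_rpow_one_third (hΔpos n).le (hΔ1.trans hn'))
    _ = (A + B) * 1 * m := by ring
    _ ≤ (A + B) * log (n * Δ n) * m := by gcongr

end Rate

theorem stmt_18_general (θ : ℝ) (hθ : 0 < θ) [IsProbabilityMeasure (ℙ : Measure Ω)]
    (X : Fin 2 → ℝ → Ω → ℝ) (hX : IsOUPair θ X)
    (Δ : ℕ → ℝ) (hΔpos : ∀ n, 0 < Δ n) (hΔ0 : Tendsto Δ atTop (𝓝 0))
    (hT : Tendsto (fun n : ℕ => (n : ℝ) * Δ n) atTop atTop) :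
    (∀ n : ℕ, 0 < n →
      dKol (Measure.map (fun ω => √θ * √(n * Δ n) * ouRhoTilde X n (Δ n) ω) ℙ) (gaussianReal 0 1)
        ≤ 292 / √θ * (1 / √(n * Δ n)) + 2 * θ * Δ n) ∧
    Tendsto (fun n : ℕ => dKol (Measure.map (fun ω => √(n * Δ n) * ouRhoTilde X n (Δ n) ω) ℙ)
      (gaussianReal 0 (1 / θ).toNNReal)) atTop (𝓝 0) := by
  have hbound (n : ℕ) (hn : 0 < n) := hX.dKol_ouRhoTilde_le hθ hn (hΔpos n)
  refine ⟨hbound, squeeze_zero' (Eventually.of_forall fun n => dKol_nonneg _ _)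
    ((eventually_gt_atTop 0).mono fun n hn =>
      (hX.dKol_ouRhoTilde_one_div_eq hθ n (Δ n)).trans_le (hbound n hn)) ?_⟩
  have hsqrt : Tendsto (fun n : ℕ => 1 / √(n * Δ n)) atTop (𝓝 0) := by
    simpa only [one_div, Function.comp_def] using
      tendsto_inv_atTop_zero.comp (tendsto_sqrt_atTop.comp hT)
  simpa using (hsqrt.const_mul (292 / √θ)).add (hΔ0.const_mul (2 * θ))

/-- if `Δₙ → 0` and `nΔₙ → ∞`, there are `c(θ) > 0` and `n₀` such that
for `n ≥ n₀`,
`d_Kol(√θ·√Tₙ·ρ̃(n), N(0,1)) ≤ c(θ)·ln(nΔₙ)·max((nΔₙ)^{−1/2}, (nΔₙ²)^{1/3})`;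
in particular if additionally `nΔₙ² → 0` then `√Tₙ·ρ̃(n) ⇒ N(0, 1/θ)`. -/
theorem stmt_18 (θ : ℝ) (hθ : 0 < θ) [IsProbabilityMeasure (ℙ : Measure Ω)]
    (X : Fin 2 → ℝ → Ω → ℝ) (hX : IsOUPair θ X)
    (Δ : ℕ → ℝ) (hΔpos : ∀ n, 0 < Δ n) (hΔ0 : Tendsto Δ atTop (𝓝 0))
    (hT : Tendsto (fun n : ℕ => (n : ℝ) * Δ n) atTop atTop) :
    (∃ c : ℝ, 0 < c ∧ ∃ n₀ : ℕ, ∀ n : ℕ, n₀ ≤ n →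
      dKol (Measure.map
            (fun ω => Real.sqrt θ * Real.sqrt ((n : ℝ) * Δ n) * ouRhoTilde X n (Δ n) ω) ℙ)
          (gaussianReal 0 1)
        ≤ c * Real.log ((n : ℝ) * Δ n)
            * max (1 / Real.sqrt ((n : ℝ) * Δ n)) (((n : ℝ) * (Δ n) ^ 2) ^ ((1 : ℝ) / 3))) ∧
    (Tendsto (fun n : ℕ => (n : ℝ) * (Δ n) ^ 2) atTop (𝓝 0) →
      Tendsto (fun n : ℕ =>
          dKol (Measure.map
              (fun ω => Real.sqrt ((n : ℝ) * Δ n) * ouRhoTilde X n (Δ n) ω) ℙ)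
            (gaussianReal 0 (Real.toNNReal (1 / θ)))) atTop (𝓝 0)) := by
  have h := stmt_18_general θ hθ X hX Δ hΔpos hΔ0 hT
  exact ⟨exists_forall_ge_le_mul_log_mul_max (by positivity) (by positivity) hΔpos hΔ0 hT h.1,
    fun _ => h.2⟩

end
end
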